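/- Let {ψ_i(z)=T_i z+t_i}_{i=1}^N be a planar box-like self-affine IFS satisfying the ROSC in which every T_i is diagonal, (p_i)_{i=1}^N a positive probability vector, and μ the associated self-affine measure. For each q≥0, either max{γ_A(q),γ_B(q)} ≤ t(q) or min{γ_A(q),γ_B(q)} ≥ t(q), and the L^q-spectrum τ_μ(q) exists. (a) If max{γ_A(q),γ_B(q)} ≤ t(q), then τ_μ(q) = max{γ_A(q),γ_B(q)} = max{x+y : ∑_{i=1}^N p_i^q a_i^x b_i^y = 1, γ_B(q)−τ_B(q) ≤ x ≤ τ_A(q)} = max{x+y : ∑_{i=1}^N p_i^q a_i^x b_i^y = 1, γ_A(q)−τ_A(q) ≤ y ≤ τ_B(q)}. (b) If min{γ_A(q),γ_B(q)} ≥ t(q), then τ_μ(q) = min{x+y : ∑_{i=1}^N p_i^q a_i^x b_i^y = 1, τ_A(q) ≤ x ≤ γ_B(q)−τ_B(q)} = min{x+y : ∑_{i=1}^N p_i^q a_i^x b_i^y = 1, τ_B(q) ≤ y ≤ γ_A(q)−τ_A(q)}; moreover (b1) if ∑_{i=1}^N p_i^q a_i^{τ_A(q)} b_i^{γ_A(q)−τ_A(q)}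 log(a_i/b_i) ≥ 0 then τ_μ(q)=γ_A(q); (b2) if ∑_{i=1}^N p_i^q b_i^{τ_B(q)} a_i^{γ_B(q)−τ_B(q)} log(a_i/b_i) ≤ 0 then τ_μ(q)=γ_B(q); (b3) otherwise there exist x∈[τ_A(q),γ_B(q)−τ_B(q)] and y∈[τ_B(q),γ_A(q)−τ_A(q)] with ∑_{i=1}^N p_i^q a_i^x b_i^y = 1 and ∑_{i=1}^N p_i^q a_i^x b_i^y log(a_i/b_i) = 0 such that τ_μ(q) = x+y < min{γ_A(q),γ_B(q)}. -/

import Mathlib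

open MeasureTheory Filter Set
open scoped Classical

noncomputable section

namespace LqGIFS

/-! ### Mesh cubes, moment sums, L^q spectra, box dimension -/

/-- Closed cube of the `δ`-mesh of `ℝ`. -/
def meshCube1 (δ : ℝ) (k : ℤ) : Set ℝ := Set.Icc ((k : ℝ) * δ) (((k : ℝ) + 1) * δ)

/-- Closed cube of the `δ`-mesh of `ℝ²`. -/
def meshCube2 (δ : ℝ) (k : ℤ × ℤ) : Set (ℝ × ℝ) :=
  (Set.Icc ((k.1 : ℝ) * δ) (((k.1 : ℝ) + 1) * δ)) ×ˢ
    (Set.Icc ((k.2 : ℝ) * δ) (((k.2 : ℝ) + 1) * δ))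

/-- The moment sum `D_δ^q(ν)` for a measure on `ℝ` (cubes of zero measure are omitted,
so that at `q = 0` this counts the mesh cubes of positive measure). -/
def Dq1 (ν : Measure ℝ) (δ q : ℝ) : ℝ :=
  ∑' k : ℤ, if ν (meshCube1 δ k) = 0 then 0 else (ν (meshCube1 δ k)).toReal ^ q

/-- The moment sum `D_δ^q(ν)` for a measure on `ℝ²`. -/
def Dq2 (ν : Measure (ℝ × ℝ)) (δ q : ℝ) : ℝ :=
  ∑' k : ℤ × ℤ, if ν (meshCube2 δ k) = 0 then 0 else (ν (meshCube2 δ k)).toReal ^ q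

/-- The `L^q`-spectrum of a measure on `ℝ` exists and equals `s` (i.e. upper and lower
`L^q`-spectra coincide and equal `s`). -/
def HasLq1 (ν : Measure ℝ) (q s : ℝ) : Prop :=
  Tendsto (fun δ : ℝ => Real.log (Dq1 ν δ q) / (-Real.log δ))
    (nhdsWithin 0 (Set.Ioi 0)) (nhds s)

/-- The `L^q`-spectrum of a measure on `ℝ²` exists and equals `s`. -/
def HasLq2 (ν : Measure (ℝ × ℝ)) (q s : ℝ) : Prop :=
  Tendsto (fun δ : ℝ => Real.log (Dq2 ν δ q) / (-Real.log δ))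
    (nhdsWithin 0 (Set.Ioi 0)) (nhds s)

/-- Number of closed `δ`-mesh cubes of `ℝ²` meeting `X`. -/
def boxCount (X : Set (ℝ × ℝ)) (δ : ℝ) : ℕ :=
  Set.ncard {k : ℤ × ℤ | (X ∩ meshCube2 δ k).Nonempty}

/-- The box dimension of `X` exists and equals `d`. -/
def HasBoxDim (X : Set (ℝ × ℝ)) (d : ℝ) : Prop :=
  Tendsto (fun δ : ℝ => Real.log (boxCount X δ) / (-Real.log δ))
    (nhdsWithin 0 (Set.Ioi 0)) (nhds d)

/-! ### Matrices: 1-norm, spectral radius, permutation matrices -/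

/-- The 1-norm `‖A‖ = ∑_{i,j} |a_{ij}|` of a square matrix. -/
def mnorm {ι : Type*} [Fintype ι] (A : Matrix ι ι ℝ) : ℝ := ∑ i, ∑ j, |A i j|

/-- The spectral radius of a square real matrix, via the Gelfand formula. -/
def specRad {ι : Type*} [Fintype ι] [DecidableEq ι] (A : Matrix ι ι ℝ) : ℝ :=
  Filter.limsup (fun k : ℕ => (mnorm (A ^ k)) ^ ((k : ℝ)⁻¹)) Filter.atTop

/-- A square 0-1 matrix with exactly one 1 in each row and each column. -/
def IsPermMatrix {ι : Type*} (Z : Matrix ι ι ℝ) : Prop :=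
  (∀ i j, Z i j = 0 ∨ Z i j = 1) ∧ (∀ i, ∃! j, Z i j = 1) ∧ (∀ j, ∃! i, Z i j = 1)

/-! ### Directed graphs -/

/-- Strong connectivity of the finite directed graph with edge set `E`,
initial vertex map `ini` and terminal vertex map `ter`. -/
def GraphSC {V E : Type*} (ini ter : E → V) : Prop :=
  ∀ v v' : V, Relation.TransGen (fun u u' : V => ∃ e, ini e = u ∧ ter e = u') v v'

/-- The matrix `F^{(q)}_{x,y}` with entry `p_{e'}^q a_{e'}^x b_{e'}^y` at `(e,e')` when
`t(e) = i(e')`, and `0` otherwise. -/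
def FmatG {V E : Type*} (ini ter : E → V) (p a b : E → ℝ) (q x y : ℝ) :
    Matrix E E ℝ :=
  fun e e' => if ter e = ini e' then p e' ^ q * a e' ^ x * b e' ^ y else 0

/-- `f` is the entrywise product of the normalized left and right Perron vectors of the
irreducible matrix `F^{(q)}_{x,y(x)}` (spectral radius 1). -/
def IsPerronData {V E : Type*} [Fintype E] [DecidableEq E] (ini ter : E → V)
    (p a b : E → ℝ) (q x yx : ℝ) (f : E → ℝ) : Prop :=
  specRad (FmatG ini ter p a b q x yx) = 1 ∧
  ∃ u v : E → ℝ, (∀ e, 0 < u e) ∧ (∀ e, 0 < v e) ∧ (∑ e, u e) = 1 ∧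
    (FmatG ini ter p a b q x yx).mulVec u = u ∧
    (FmatG ini ter p a b q x yx).vecMul v = v ∧
    (∑ e, v e * u e) = 1 ∧ (∀ e, f e = v e * u e)

/-! ### Planar box-like graph-directed self-affine systems -/

/-- A planar box-like self-affine GIFS: a finite directed graph together with, for each
edge `e`, a contraction `ψ_e(z) = T_e z + t_e` whose linear part is the diagonal matrix
`diag(±a_e, ±b_e)` (when `diag e = true`) or the anti-diagonal matrix with entries
`±a_e` (top right) and `±b_e` (bottom left) (when `diag e = false`), `0 < a_e, b_e < 1`. -/
structure BoxLikeGIFS (V E : Type*) where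
  init : E → V
  term : E → V
  a : E → ℝ
  b : E → ℝ
  sa : E → ℝ
  sb : E → ℝ
  diag : E → Bool
  trans : E → ℝ × ℝ
  a_mem : ∀ e, a e ∈ Set.Ioo (0 : ℝ) 1
  b_mem : ∀ e, b e ∈ Set.Ioo (0 : ℝ) 1
  sa_mem : ∀ e, sa e = 1 ∨ sa e = -1
  sb_mem : ∀ e, sb e = 1 ∨ sb e = -1
  edge_exists : ∀ v, ∃ e, init e = v

namespace BoxLikeGIFS

variable {V E : Type*}

/-- The contraction `ψ_e`. -/
def map (S : BoxLikeGIFS V E) (e : E) : ℝ × ℝ → ℝ × ℝ := fun z =>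
  if S.diag e then
    (S.sa e * S.a e * z.1 + (S.trans e).1, S.sb e * S.b e * z.2 + (S.trans e).2)
  else
    (S.sa e * S.a e * z.2 + (S.trans e).1, S.sb e * S.b e * z.1 + (S.trans e).2)

def StronglyConnected (S : BoxLikeGIFS V E) : Prop := GraphSC S.init S.term

/-- The open unit square `(0,1)²`. -/
def unitSq : Set (ℝ × ℝ) := Set.Ioo (0 : ℝ) 1 ×ˢ Set.Ioo (0 : ℝ) 1

/-- The rectangular open set condition. -/
def ROSC (S : BoxLikeGIFS V E) : Prop :=
  (∀ e : E, S.map e '' unitSq ⊆ unitSq) ∧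
  ∀ e e' : E, e ≠ e' → S.init e = S.init e' →
    Disjoint (S.map e '' unitSq) (S.map e' '' unitSq)

/-- Positive weights summing to one at each vertex. -/
def IsWeights [Fintype E] (S : BoxLikeGIFS V E) (p : E → ℝ) : Prop :=
  (∀ e, 0 < p e) ∧ ∀ v : V, (∑ e : E, if S.init e = v then p e else 0) = 1

/-- `μ` is the associated graph-directed box-like self-affine measure family. -/
def IsGDMeasure [Fintype E] (S : BoxLikeGIFS V E) (p : E → ℝ)
    (μ : V → Measure (ℝ × ℝ)) : Prop :=
  (∀ v, IsProbabilityMeasure (μ v)) ∧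
  ∀ v : V, μ v =
    ∑ e : E, if S.init e = v then
      ENNReal.ofReal (p e) • ((μ (S.term e)).map (S.map e)) else (0 : Measure (ℝ × ℝ))

/-- `X` is the associated graph-directed self-affine carpet family. -/
def IsGDAttractor (S : BoxLikeGIFS V E) (X : V → Set (ℝ × ℝ)) : Prop :=
  (∀ v, (X v).Nonempty ∧ IsCompact (X v)) ∧
  ∀ v : V, X v = ⋃ e : E, ⋃ _ : S.init e = v, S.map e '' X (S.term e)

/-- The matrix `F^{(q)}_{x,y}` of the system. -/
def Fmat (S : BoxLikeGIFS V E) (p : E → ℝ) (q x y : ℝ) : Matrix E E ℝ :=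
  FmatG S.init S.term p S.a S.b q x y

/-- The `(2#E) × (2#E)` block matrix `𝒢^{(q)}_{x,y}`, indexed by `E × Bool`
(`false` = first index of the block, `true` = second). -/
def Gmat (S : BoxLikeGIFS V E) (p : E → ℝ) (τx τy : V → ℝ) (q x y : ℝ) :
    Matrix (E × Bool) (E × Bool) ℝ := fun i j =>
  if S.term i.1 = S.init j.1 then
    if S.diag j.1 then
      if i.2 = false ∧ j.2 = false then
        p j.1 ^ q * S.a j.1 ^ (x + τx (S.term j.1)) * S.b j.1 ^ (y - τx (S.term j.1))
      else if i.2 = true ∧ j.2 = true then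
        p j.1 ^ q * S.b j.1 ^ (x + τy (S.term j.1)) * S.a j.1 ^ (y - τy (S.term j.1))
      else 0
    else
      if i.2 = false ∧ j.2 = true then
        p j.1 ^ q * S.a j.1 ^ (x + τy (S.term j.1)) * S.b j.1 ^ (y - τy (S.term j.1))
      else if i.2 = true ∧ j.2 = false then
        p j.1 ^ q * S.b j.1 ^ (x + τx (S.term j.1)) * S.a j.1 ^ (y - τx (S.term j.1))
      else 0
  else 0

/-! ### Words -/

/-- An admissible word: consecutive edges are composable. -/
def Admissible (S : BoxLikeGIFS V E) (w : List E) : Prop :=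
  List.Chain' (fun e e' => S.term e = S.init e') w

/-- `(c_w, d_w)`: width and height of the rectangle `ψ_w([0,1]²)`. -/
def wdims (S : BoxLikeGIFS V E) : List E → ℝ × ℝ
  | [] => (1, 1)
  | e :: w =>
      if S.diag e then (S.a e * (wdims S w).1, S.b e * (wdims S w).2)
      else (S.a e * (wdims S w).2, S.b e * (wdims S w).1)

/-- Whether `T_w` is diagonal (`true`) or anti-diagonal (`false`). -/
def wordDiag (S : BoxLikeGIFS V E) : List E → Bool
  | [] => true
  | e :: w => S.diag e == wordDiag S w

/-- The larger singular value `α₁(w) = max(c_w, d_w)` of `T_w`. -/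
def alpha1 (S : BoxLikeGIFS V E) (w : List E) : ℝ := max (S.wdims w).1 (S.wdims w).2

/-- The smaller singular value `α₂(w) = min(c_w, d_w)` of `T_w`. -/
def alpha2 (S : BoxLikeGIFS V E) (w : List E) : ℝ := min (S.wdims w).1 (S.wdims w).2

/-- Initial vertex of a (nonempty) word. -/
def wordInit [Nonempty V] (S : BoxLikeGIFS V E) (w : List E) : V :=
  (w.head?.map S.init).getD (Classical.arbitrary V)

/-- Terminal vertex of a (nonempty) word. -/
def wordTerm [Nonempty V] (S : BoxLikeGIFS V E) (w : List E) : V :=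
  (w.getLast?.map S.term).getD (Classical.arbitrary V)

/-- `p_w = p_{w_1} ⋯ p_{w_k}`. -/
def wordProb (p : E → ℝ) (w : List E) : ℝ := (w.map p).prod

/-- `τ_w(q)`: given the values `τx v`, `τy v` of the `L^q`-spectra of the two coordinate
projections of `μ_v`, this is the `L^q`-spectrum of the projection of `μ_{t(w)} ∘ ψ_w⁻¹`
onto the longest side of `ψ_w([0,1]²)`, i.e. `τx (t w)` if `π_w = π_x` and `τy (t w)`
otherwise. -/
def wordTau [Nonempty V] (S : BoxLikeGIFS V E) (τx τy : V → ℝ) (w : List E) : ℝ :=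
  if ((S.wdims w).2 ≤ (S.wdims w).1 ↔ S.wordDiag w = true) then τx (S.wordTerm w)
  else τy (S.wordTerm w)

/-- The modified singular value function
`φ^{s,q}(w) = p_w^q α₁(w)^{τ_w(q)} α₂(w)^{s - τ_w(q)}`. -/
def msvf [Nonempty V] (S : BoxLikeGIFS V E) (p : E → ℝ) (τx τy : V → ℝ)
    (s q : ℝ) (w : List E) : ℝ :=
  wordProb p w ^ q * S.alpha1 w ^ (S.wordTau τx τy w) *
    S.alpha2 w ^ (s - S.wordTau τx τy w)

/-- The modified singular value function matrix `A_k^{s,q}`. -/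
def Amat [Nonempty V] [Fintype E] (S : BoxLikeGIFS V E) (p : E → ℝ) (τx τy : V → ℝ)
    (s q : ℝ) (k : ℕ) : Matrix V V ℝ := fun v v' =>
  ∑ f : Fin k → E,
    if S.Admissible (List.ofFn f) ∧ S.wordInit (List.ofFn f) = v ∧
        S.wordTerm (List.ofFn f) = v'
    then S.msvf p τx τy s q (List.ofFn f) else 0

/-- The family `E^*_δ` of admissible words whose shortest side drops below `δ`
exactly at the last letter. -/
def EstarDelta (S : BoxLikeGIFS V E) (δ : ℝ) : Set (List E) :=
  {w | w ≠ [] ∧ S.Admissible w ∧ S.alpha2 w < δ ∧ δ ≤ S.alpha2 w.dropLast}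

end BoxLikeGIFS

/-! ### Partition of the projections, for the splitting proposition -/

/-- The projection family: `(v, false) ↦ μ_v^x` and `(v, true) ↦ μ_v^y`. -/
def projMeas {V : Type*} (μ : V → Measure (ℝ × ℝ)) (i : V × Bool) : Measure ℝ :=
  if i.2 then (μ i.1).map Prod.snd else (μ i.1).map Prod.fst

/-- `A`, `B` is a partition of the projection family `{μ_v^x, μ_v^y}_v` into two disjoint
families of cardinality `#V`, on each of which the `L^q`-spectra exist and share a common
value, and which splits `{μ_v^x, μ_v^y}` for each `v`. -/
def GoodPartition {V : Type*} [Fintype V] (μ : V → Measure (ℝ × ℝ))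
    (A B : Finset (V × Bool)) : Prop :=
  Disjoint A B ∧ A ∪ B = Finset.univ ∧
  A.card = Fintype.card V ∧ B.card = Fintype.card V ∧
  ∃ τA τB : ℝ → ℝ,
    (∀ q : ℝ, 0 ≤ q → ∀ i ∈ A, HasLq1 (projMeas μ i) q (τA q)) ∧
    (∀ q : ℝ, 0 ≤ q → ∀ i ∈ B, HasLq1 (projMeas μ i) q (τB q)) ∧
    ∀ v : V, ((v, false) ∈ A ∧ (v, true) ∈ B) ∨ ((v, false) ∈ B ∧ (v, true) ∈ A)

end LqGIFS

end

open LqGIFS MeasureTheory Filter Set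

/-! Stop every word of the system when the shortest side of its rectangle first drops to `δ`. Up to
constants, the planar moment sum at scale `δ` is then the sum over these words of the `q`-th power
of the mass times the moment sum of the projection along the longest side, that is, up to
subpolynomial factors, the sum of `p_w ^ q * (long / δ) ^ τ_w`, where `τ_w` is `τA` for wide and
`τB` for high rectangles.

Every point `(x, y)` of the level curve `∑ p_i ^ q * a_i ^ x * b_i ^ y = 1` turns the stopping words
into a probability vector `p_w ^ q * width ^ x * height ^ y`, whose entries times `δ ^ (-(x + y))`
are comparable to `p_w ^ q * (long / δ) ^ x` for wide and to `p_w ^ q * (long / δ) ^ y` for high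
rectangles. Comparing exponents bounds the spectrum by `x + y`: from above where `τA ≤ x` and
`τB ≤ y`, from below where `x ≤ τA` and `y ≤ τB`. In case (b) the upper bound is best at the point
of the curve minimising `x + y`. There the derivative along the curve, the drift
`∑ p_i ^ q * a_i ^ x * b_i ^ y * log (a_i / b_i)`, has a sign unless the minimiser is an endpoint,
and this sign makes rectangles of the wrong shape exponentially unlikely, so that the lower bound
survives. -/

namespace LqGIFS

open scoped Topology

/-! ### The level curve of the Moran sum -/

/-- Positive masses `P i` carried by rectangles of width `a i` and height `b i` in `(0, 1)`: the
data entering the equation `∑ i, P i * a i ^ x * b i ^ y = 1`. -/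
structure MoranData (ι : Type*) where
  P : ι → ℝ
  a : ι → ℝ
  b : ι → ℝ
  P_pos : ∀ i, 0 < P i
  a_mem : ∀ i, a i ∈ Ioo (0 : ℝ) 1
  b_mem : ∀ i, b i ∈ Ioo (0 : ℝ) 1

namespace MoranData

variable {ι : Type*} (M : MoranData ι)

/-- The data with the roles of width and height exchanged. -/
@[simps] def swap : MoranData ι where
  P := M.P
  a := M.b
  b := M.a
  P_pos := M.P_pos
  a_mem := M.b_mem
  b_mem := M.a_mem

/-- The weight of the letter `i` at the exponents `x`, `y`. -/
noncomputable def weight (x y : ℝ) (i : ι) : ℝ := M.P i * M.a i ^ x * M.b i ^ y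

lemma weight_pos (x y : ℝ) (i : ι) : 0 < M.weight x y i :=
  mul_pos (mul_pos (M.P_pos i) (Real.rpow_pos_of_pos (M.a_mem i).1 _))
    (Real.rpow_pos_of_pos (M.b_mem i).1 _)

@[simp] lemma weight_swap (x y : ℝ) : M.swap.weight x y = M.weight y x := by
  ext i
  simp only [weight, swap_P, swap_a, swap_b]
  ring

lemma weight_eq_mul_exp (x y x' y' : ℝ) (i : ι) :
    M.weight x' y' i = M.weight x y i *
      Real.exp ((x' - x) * Real.log (M.a i) + (y' - y) * Real.log (M.b i)) := by
  simp only [weight, Real.rpow_def_of_pos (M.a_mem i).1, Real.rpow_def_of_pos (M.b_mem i).1,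
    mul_assoc, ← Real.exp_add]
  ring_nf

lemma continuous_weight (i : ι) : Continuous fun z : ℝ × ℝ => M.weight z.1 z.2 i :=
  (continuous_const.mul ((Real.continuous_const_rpow (M.a_mem i).1.ne').comp continuous_fst)).mul
    ((Real.continuous_const_rpow (M.b_mem i).1.ne').comp continuous_snd)

variable [Fintype ι]

/-- The Moran sum, whose level set at `1` is the curve on which the spectrum is found. -/
noncomputable def moranSum (x y : ℝ) : ℝ := ∑ i, M.weight x y i

/-- The derivative of the Moran sum in the direction `(1, -1)`. -/
noncomputable def drift (x y : ℝ) : ℝ := ∑ i, M.weight x y i * Real.log (M.a i / M.b i)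

/-- The derivative of the Moran sum in the direction `(0, 1)`. -/
noncomputable def logSum (x y : ℝ) : ℝ := ∑ i, M.weight x y i * Real.log (M.b i)

/-- The values of `x + y` on the part of the level curve of the Moran sum above `[x₀, x₁]`. -/
def arcSums (x₀ x₁ : ℝ) : Set ℝ :=
  {s | ∃ x y : ℝ, M.moranSum x y = 1 ∧ x₀ ≤ x ∧ x ≤ x₁ ∧ s = x + y}

@[simp] lemma moranSum_swap (x y : ℝ) : M.swap.moranSum x y = M.moranSum y x := by
  simp only [moranSum, weight_swap]

@[simp] lemma drift_swap (x y : ℝ) : M.swap.drift x y = -M.drift y x := by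
  simp only [drift, weight_swap, swap_a, swap_b, ← Finset.sum_neg_distrib]
  refine Finset.sum_congr rfl fun i _ => ?_
  rw [← inv_div (M.a i), Real.log_inv, mul_neg]

lemma continuous_moranSum : Continuous fun z : ℝ × ℝ => M.moranSum z.1 z.2 :=
  continuous_finsetSum _ fun i _ => M.continuous_weight i

lemma continuous_drift : Continuous fun z : ℝ × ℝ => M.drift z.1 z.2 :=
  continuous_finsetSum _ fun i _ => (M.continuous_weight i).mul_const _

lemma continuous_logSum : Continuous fun z : ℝ × ℝ => M.logSum z.1 z.2 :=
  continuous_finsetSum _ fun i _ => (M.continuous_weight i).mul_const _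

/-- The tangent plane inequality for the convex function `moranSum`, in the coordinates `x` and
`x + y`. -/
lemma moranSum_add_le (x y x' y' : ℝ) :
    M.moranSum x y + (x' - x) * M.drift x y + (x' + y' - (x + y)) * M.logSum x y ≤
      M.moranSum x' y' := by
  simp only [moranSum, drift, logSum, Finset.mul_sum, ← Finset.sum_add_distrib]
  refine Finset.sum_le_sum fun i _ => ?_
  rw [M.weight_eq_mul_exp x y x' y' i, Real.log_div (M.a_mem i).1.ne' (M.b_mem i).1.ne']
  calc _ = M.weight x y i *
        ((x' - x) * Real.log (M.a i) + (y' - y) * Real.log (M.b i) + 1) := by ring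
    _ ≤ _ := mul_le_mul_of_nonneg_left (Real.add_one_le_exp _) (M.weight_pos x y i).le

section Nonempty

variable {M} [Nonempty ι] {x₀ x₁ y₀ y₁ x x' y y' : ℝ}

lemma logSum_neg (M : MoranData ι) (x y : ℝ) : M.logSum x y < 0 :=
  Finset.sum_neg (fun i _ => mul_neg_of_pos_of_neg (M.weight_pos x y i)
    (Real.log_neg (M.b_mem i).1 (M.b_mem i).2)) Finset.univ_nonempty

lemma moranSum_lt_of_lt_of_le (hx : x < x') (hy : y ≤ y') : M.moranSum x' y' < M.moranSum x y := by
  refine Finset.sum_lt_sum_of_nonempty Finset.univ_nonempty fun i _ => ?_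
  refine mul_lt_mul (mul_lt_mul_of_pos_left ?_ (M.P_pos i)) ?_
    (Real.rpow_pos_of_pos (M.b_mem i).1 _)
    (mul_pos (M.P_pos i) (Real.rpow_pos_of_pos (M.a_mem i).1 _)).le
  · exact Real.rpow_lt_rpow_of_exponent_gt (M.a_mem i).1 (M.a_mem i).2 hx
  · exact Real.rpow_le_rpow_of_exponent_ge (M.b_mem i).1 (M.b_mem i).2.le hy

lemma moranSum_lt_of_le_of_lt (hx : x ≤ x') (hy : y < y') : M.moranSum x' y' < M.moranSum x y := by
  simpa using moranSum_lt_of_lt_of_le (M := M.swap) hy hx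

lemma le_iff_le_of_moranSum_eq (h : M.moranSum x y = M.moranSum x' y') : x ≤ x' ↔ y' ≤ y := by
  constructor <;> intro hle <;> by_contra! hlt
  · exact (moranSum_lt_of_le_of_lt hle hlt).ne' h
  · exact (moranSum_lt_of_lt_of_le hlt hle).ne h

lemma max_add_le_add_iff_of_moranSum_eq (h : M.moranSum x₀ y₀ = M.moranSum x₁ y₁) :
    max (x₀ + y₀) (x₁ + y₁) ≤ x₀ + y₁ ↔ x₁ ≤ x₀ := by
  simp [← le_iff_le_of_moranSum_eq h.symm]

lemma add_le_min_add_iff_of_moranSum_eq (h : M.moranSum x₀ y₀ = M.moranSum x₁ y₁) :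
    x₀ + y₁ ≤ min (x₀ + y₀) (x₁ + y₁) ↔ x₀ ≤ x₁ := by
  simp [← le_iff_le_of_moranSum_eq h]

lemma le_of_moranSum_le (h : M.moranSum x y ≤ M.moranSum x y') : y' ≤ y := by
  by_contra! hlt
  exact (moranSum_lt_of_le_of_lt le_rfl hlt).not_ge h

lemma setOf_height_mem_eq_arcSums (h₀ : M.moranSum x₀ y₀ = 1) (h₁ : M.moranSum x₁ y₁ = 1) :
    {s | ∃ x y : ℝ, M.moranSum x y = 1 ∧ y₁ ≤ y ∧ y ≤ y₀ ∧ s = x + y} = M.arcSums x₀ x₁ := by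
  ext s
  refine exists_congr fun x => exists_congr fun y => and_congr_right fun h => ?_
  rw [← le_iff_le_of_moranSum_eq (h.trans h₁.symm), ← le_iff_le_of_moranSum_eq (h₀.trans h.symm)]
  tauto

lemma swap_arcSums (h₀ : M.moranSum x₀ y₀ = 1) (h₁ : M.moranSum x₁ y₁ = 1) :
    M.swap.arcSums y₁ y₀ = M.arcSums x₀ x₁ := by
  rw [← setOf_height_mem_eq_arcSums h₀ h₁]
  ext s
  rw [arcSums, mem_ofPred_eq, exists_comm]
  simp only [moranSum_swap, add_comm, mem_ofPred_eq]

lemma add_le_max_of_moranSum_eq (h₀ : M.moranSum x₀ y₀ = M.moranSum x y)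
    (h₁ : M.moranSum x₁ y₁ = M.moranSum x y) (hx₁ : x₁ ≤ x) (hx₀ : x ≤ x₀) :
    x + y ≤ max (x₀ + y₀) (x₁ + y₁) := by
  by_contra! hlt
  obtain ⟨hlt₀, hlt₁⟩ := max_lt_iff.1 hlt
  have ht₀ := M.moranSum_add_le x y x₀ y₀
  have ht₁ := M.moranSum_add_le x y x₁ y₁
  have hneg := M.logSum_neg x y
  have hl₀ := mul_pos_of_neg_of_neg (sub_neg.2 hlt₀) hneg
  have hl₁ := mul_pos_of_neg_of_neg (sub_neg.2 hlt₁) hneg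
  rcases le_total 0 (M.drift x y) with hE | hE
  · linarith [mul_nonneg (sub_nonneg.2 hx₀) hE]
  · linarith [mul_nonneg_of_nonpos_of_nonpos (sub_nonpos.2 hx₁) hE]

lemma isGreatest_arcSums (h₀ : M.moranSum x₀ y₀ = 1) (h₁ : M.moranSum x₁ y₁ = 1)
    (hx : x₁ ≤ x₀) : IsGreatest (M.arcSums x₁ x₀) (max (x₀ + y₀) (x₁ + y₁)) := by
  constructor
  · rcases max_choice (x₀ + y₀) (x₁ + y₁) with h | h <;> rw [h]
    · exact ⟨x₀, y₀, h₀, hx, le_rfl, rfl⟩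
    · exact ⟨x₁, y₁, h₁, le_rfl, hx, rfl⟩
  · rintro _ ⟨x, y, h, hx₁, hx₀, rfl⟩
    exact add_le_max_of_moranSum_eq (h₀.trans h.symm) (h₁.trans h.symm) hx₁ hx₀

lemma exists_isLeast_arcSums (h₀ : M.moranSum x₀ y₀ = 1) (h₁ : M.moranSum x₁ y₁ = 1)
    (hx : x₀ ≤ x₁) : ∃ s, IsLeast (M.arcSums x₀ x₁) s := by
  set K : Set (ℝ × ℝ) := {z | M.moranSum z.1 z.2 = 1} ∩ (Icc x₀ x₁ ×ˢ Icc y₁ y₀)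
  have hcpt : IsCompact K := (isCompact_Icc.prod isCompact_Icc).inter_left
    (isClosed_eq M.continuous_moranSum continuous_const)
  have hmem {x y : ℝ} (h : M.moranSum x y = 1) (hx₀ : x₀ ≤ x) (hx₁ : x ≤ x₁) : (x, y) ∈ K :=
    ⟨h, ⟨hx₀, hx₁⟩, (le_iff_le_of_moranSum_eq (h.trans h₁.symm)).1 hx₁,
      (le_iff_le_of_moranSum_eq (h₀.trans h.symm)).1 hx₀⟩
  obtain ⟨z, hz, hmin⟩ := hcpt.exists_isMinOn ⟨_, hmem h₀ le_rfl hx⟩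
    (f := fun z : ℝ × ℝ => z.1 + z.2) (by fun_prop)
  refine ⟨z.1 + z.2, ⟨z.1, z.2, hz.1, hz.2.1.1, hz.2.1.2, rfl⟩, ?_⟩
  rintro _ ⟨x, y, h, hx₀, hx₁, rfl⟩
  exact hmin (hmem h hx₀ hx₁)

lemma isLeast_arcSums_of_drift_nonneg (h₀ : M.moranSum x₀ y₀ = 1) (hE : 0 ≤ M.drift x₀ y₀)
    (hx : x₀ ≤ x₁) : IsLeast (M.arcSums x₀ x₁) (x₀ + y₀) := by
  refine ⟨⟨x₀, y₀, h₀, le_rfl, hx, rfl⟩, ?_⟩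
  rintro _ ⟨x, y, h, hx₀, -, rfl⟩
  have ht := M.moranSum_add_le x₀ y₀ x y
  by_contra! hlt
  linarith [mul_nonneg (sub_nonneg.2 hx₀) hE,
    mul_pos_of_neg_of_neg (sub_neg.2 hlt) (M.logSum_neg x₀ y₀)]

lemma isLeast_arcSums_of_drift_nonpos (h₀ : M.moranSum x₀ y₀ = 1) (h₁ : M.moranSum x₁ y₁ = 1)
    (hE : M.drift x₁ y₁ ≤ 0) (hx : x₀ ≤ x₁) : IsLeast (M.arcSums x₀ x₁) (x₁ + y₁) := by
  rw [← swap_arcSums h₀ h₁, add_comm]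
  exact isLeast_arcSums_of_drift_nonneg (by simpa) (by simpa)
    ((le_iff_le_of_moranSum_eq (h₀.trans h₁.symm)).1 hx)

lemma one_le_moranSum_of_mem_lowerBounds (h : M.moranSum x y = 1) (hx₁ : x ≤ x₁)
    (hmin : x + y ∈ lowerBounds (M.arcSums x₀ x₁)) {s : ℝ} (hs : s ∈ Ioo 0 (x - x₀)) :
    1 ≤ M.moranSum (x - s) (y + s) := by
  by_contra! hlt
  have hcont : ContinuousOn (fun y' => M.moranSum (x - s) y') (Icc y (y + s)) :=
    (M.continuous_moranSum.comp (Continuous.prodMk_right (x - s))).continuousOn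
  have hgt : 1 < M.moranSum (x - s) y :=
    h ▸ moranSum_lt_of_lt_of_le (sub_lt_self x hs.1) le_rfl
  obtain ⟨y', hy', h'⟩ := intermediate_value_Ioo' (by linarith [hs.1]) hcont ⟨hlt, hgt⟩
  linarith [hmin ⟨x - s, y', h', by linarith [hs.2], by linarith [hs.1], rfl⟩, hy'.2]

lemma drift_nonpos_of_mem_lowerBounds (h : M.moranSum x y = 1) (hx₀ : x₀ < x) (hx₁ : x ≤ x₁)
    (hmin : x + y ∈ lowerBounds (M.arcSums x₀ x₁)) : M.drift x y ≤ 0 := by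
  have hlim : Tendsto (fun s : ℝ => M.drift (x - s) (y + s)) (𝓝[>] 0) (𝓝 (M.drift x y)) := by
    have hcont : Continuous fun s : ℝ => M.drift (x - s) (y + s) :=
      M.continuous_drift.comp (f := fun s : ℝ => (x - s, y + s)) (by fun_prop)
    simpa using (hcont.tendsto 0).mono_left nhdsWithin_le_nhds
  refine le_of_tendsto hlim ?_
  filter_upwards [Ioo_mem_nhdsGT (sub_pos.2 hx₀)] with s hs
  have ht := M.moranSum_add_le (x - s) (y + s) x y
  have hge := one_le_moranSum_of_mem_lowerBounds h hx₁ hmin hs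
  by_contra! hpos
  ring_nf at ht hge hpos
  linarith [mul_pos hs.1 hpos]

lemma drift_nonneg_of_mem_lowerBounds (h₀ : M.moranSum x₀ y₀ = 1) (h₁ : M.moranSum x₁ y₁ = 1)
    (h : M.moranSum x y = 1) (hx₀ : x₀ ≤ x) (hx₁ : x < x₁)
    (hmin : x + y ∈ lowerBounds (M.arcSums x₀ x₁)) : 0 ≤ M.drift x y := by
  rw [← swap_arcSums h₀ h₁, add_comm] at hmin
  have hy₁ : y₁ < y := by
    rwa [← not_le, ← le_iff_le_of_moranSum_eq (h₁.trans h.symm), not_le]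
  simpa using drift_nonpos_of_mem_lowerBounds (M := M.swap) (by simpa) hy₁
    ((le_iff_le_of_moranSum_eq (h₀.trans h.symm)).1 hx₀) hmin

lemma exists_drift_eq_zero_of_isLeast (h₀ : M.moranSum x₀ y₀ = 1) (h₁ : M.moranSum x₁ y₁ = 1)
    (hE₀ : M.drift x₀ y₀ < 0) (hE₁ : 0 < M.drift x₁ y₁) {s : ℝ}
    (hs : IsLeast (M.arcSums x₀ x₁) s) :
    ∃ x y : ℝ, x₀ ≤ x ∧ x ≤ x₁ ∧ y₁ ≤ y ∧ y ≤ y₀ ∧ M.moranSum x y = 1 ∧ M.drift x y = 0 ∧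
      s = x + y ∧ s < min (x₀ + y₀) (x₁ + y₁) := by
  have unique {x y y' : ℝ} (h : M.moranSum x y = 1) (h' : M.moranSum x y' = 1) : y = y' :=
    (le_of_moranSum_le (h'.trans h.symm).le).antisymm (le_of_moranSum_le (h.trans h'.symm).le)
  obtain ⟨⟨x, y, h, hx₀, hx₁, rfl⟩, hmin⟩ := hs
  have hne : x₀ < x₁ := (hx₀.trans hx₁).lt_of_ne <| by
    rintro rfl
    exact lt_asymm hE₀ (unique h₁ h₀ ▸ hE₁)
  have hlt₀ : x + y < x₀ + y₀ := (hmin ⟨x₀, y₀, h₀, le_rfl, hne.le, rfl⟩).lt_of_ne fun heq =>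
    hE₀.not_ge <| drift_nonneg_of_mem_lowerBounds h₀ h₁ h₀ le_rfl hne (heq ▸ hmin)
  have hlt₁ : x + y < x₁ + y₁ := (hmin ⟨x₁, y₁, h₁, hne.le, le_rfl, rfl⟩).lt_of_ne fun heq =>
    hE₁.not_ge <| drift_nonpos_of_mem_lowerBounds h₁ hne le_rfl (heq ▸ hmin)
  have hx₀' : x₀ < x := hx₀.lt_of_ne <| by rintro rfl; exact hlt₀.ne (unique h h₀ ▸ rfl)
  have hx₁' : x < x₁ := hx₁.lt_of_ne <| by rintro rfl; exact hlt₁.ne (unique h h₁ ▸ rfl)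
  exact ⟨x, y, hx₀, hx₁, (le_iff_le_of_moranSum_eq (h.trans h₁.symm)).1 hx₁,
    (le_iff_le_of_moranSum_eq (h₀.trans h.symm)).1 hx₀, h,
    (drift_nonpos_of_mem_lowerBounds h hx₀' hx₁ hmin).antisymm
      (drift_nonneg_of_mem_lowerBounds h₀ h₁ h hx₀ hx₁' hmin), rfl, lt_min hlt₀ hlt₁⟩

lemma exists_moranSum_lt_of_drift_nonpos (hE : M.drift x y ≤ 0) {η : ℝ} (hη : 0 < η) :
    ∃ s > 0, M.moranSum (x + s) (y - s + s * η) < M.moranSum x y := by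
  have hcont : Continuous fun s : ℝ =>
      M.drift (x + s) (y - s + s * η) + η * M.logSum (x + s) (y - s + s * η) :=
    (M.continuous_drift.comp (f := fun s : ℝ => (x + s, y - s + s * η)) (by fun_prop)).add
      ((M.continuous_logSum.comp (f := fun s : ℝ => (x + s, y - s + s * η))
        (by fun_prop)).const_mul η)
  have hneg : ∀ᶠ s in 𝓝[>] (0 : ℝ),
      M.drift (x + s) (y - s + s * η) + η * M.logSum (x + s) (y - s + s * η) < 0 :=
    nhdsWithin_le_nhds <| (hcont.tendsto 0).eventually_lt_const <| by
      simpa using add_neg_of_nonpos_of_neg hE (mul_neg_of_pos_of_neg hη (M.logSum_neg x y))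
  obtain ⟨s, hs, hs₀⟩ := (hneg.and self_mem_nhdsWithin).exists
  have ht := M.moranSum_add_le (x + s) (y - s + s * η) x y
  have := mul_neg_of_pos_of_neg hs₀ hs
  exact ⟨s, hs₀, by linarith⟩

end Nonempty
end MoranData

/-! ### Words and stopping families -/

/-- Finite complete prefix codes over `ι`: the sets of leaves of the finite trees in which every
inner vertex has one child for each letter. -/
inductive IsCompletePrefixCode {ι : Type*} [Fintype ι] : Finset (List ι) → Prop
  | singleton_nil : IsCompletePrefixCode {[]}
  | node (f : ι → Finset (List ι)) (hf : ∀ i, IsCompletePrefixCode (f i)) :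
      IsCompletePrefixCode (Finset.univ.biUnion fun i => (f i).image (List.cons i))

namespace IsCompletePrefixCode

variable {ι R : Type*} [Fintype ι] {K : Finset (List ι)}

lemma mem_node {f : ι → Finset (List ι)} {w : List ι} :
    w ∈ Finset.univ.biUnion (fun i => (f i).image (List.cons i)) ↔ ∃ i, ∃ v ∈ f i, i :: v = w := by
  simp only [Finset.mem_biUnion, Finset.mem_univ, true_and, Finset.mem_image]

lemma sum_node [AddCommMonoid R] (f : ι → Finset (List ι)) (G : List ι → R) :
    ∑ w ∈ Finset.univ.biUnion (fun i => (f i).image (List.cons i)), G w =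
      ∑ i, ∑ w ∈ f i, G (i :: w) := by
  rw [Finset.sum_biUnion]
  · exact Finset.sum_congr rfl fun i _ => Finset.sum_image fun _ _ _ _ h => (List.cons.inj h).2
  · intro i _ j _ hij
    rw [Function.onFun, Finset.disjoint_left]
    rintro _ hw hw'
    obtain ⟨v, -, rfl⟩ := Finset.mem_image.1 hw
    obtain ⟨v', -, h⟩ := Finset.mem_image.1 hw'
    exact hij (List.cons.inj h).1.symm

lemma sum_prod_eq_one [CommSemiring R] (hK : IsCompletePrefixCode K) {g : ι → R}
    (hg : ∑ i, g i = 1) : ∑ w ∈ K, (w.map g).prod = 1 := by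
  induction hK with
  | singleton_nil => simp
  | node f _ ih =>
    simp only [sum_node, List.map_cons, List.prod_cons, ← Finset.mul_sum, ih, mul_one, hg]

lemma sum_prod_le_one [CommSemiring R] [PartialOrder R] [IsOrderedRing R]
    (hK : IsCompletePrefixCode K) {g : ι → R} (hg₀ : ∀ i, 0 ≤ g i) (hg : ∑ i, g i ≤ 1) :
    ∑ w ∈ K, (w.map g).prod ≤ 1 := by
  induction hK with
  | singleton_nil => simp
  | node f _ ih =>
    simp only [sum_node, List.map_cons, List.prod_cons, ← Finset.mul_sum]
    exact (Finset.sum_le_sum fun i _ => mul_le_of_le_one_right (hg₀ i) (ih i)).trans hg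

lemma exists_first {n : ℕ} {p : List ι → Prop} (hp : ∀ w, n ≤ w.length → p w) :
    ∃ K, IsCompletePrefixCode K ∧ ∀ w ∈ K, p w ∧ (w ≠ [] → ¬ p w.dropLast) := by
  by_cases hnil : p []
  · exact ⟨_, singleton_nil, by simpa⟩
  induction n generalizing p with
  | zero => exact absurd (hp [] le_rfl) hnil
  | succ n ih =>
    have hchild (i : ι) : ∃ K, IsCompletePrefixCode K ∧
        ∀ w ∈ K, p (i :: w) ∧ ¬ p (i :: w).dropLast := by
      by_cases hi : p [i]
      · exact ⟨_, singleton_nil, by simpa using ⟨hi, hnil⟩⟩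
      · obtain ⟨K, hK, hKp⟩ := ih (p := fun w => p (i :: w)) (fun w hw => hp _ (by simpa)) hi
        refine ⟨K, hK, fun w hw => ⟨(hKp w hw).1, ?_⟩⟩
        rcases eq_or_ne w [] with rfl | hne
        · simpa
        · rw [List.dropLast_cons_of_ne_nil hne]
          exact (hKp w hw).2 hne
    choose f hf hfp using hchild
    refine ⟨_, node f hf, fun w hw => ?_⟩
    obtain ⟨i, v, hv, rfl⟩ := mem_node.1 hw
    exact ⟨(hfp i v hv).1, fun _ => (hfp i v hv).2⟩

end IsCompletePrefixCode

lemma exists_Icc_subset_Ioo_of_finite {κ : Type*} [Finite κ] {c : κ → ℝ}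
    (hc : ∀ i, c i ∈ Ioo (0 : ℝ) 1) :
    ∃ r ∈ Ioo (0 : ℝ) 1, ∃ ρ ∈ Ioo (0 : ℝ) 1, ∀ i, c i ∈ Icc r ρ := by
  cases isEmpty_or_nonempty κ
  · exact ⟨1 / 2, by norm_num, 1 / 2, by norm_num, isEmptyElim⟩
  · obtain ⟨i, hi⟩ := Finite.exists_min c
    obtain ⟨j, hj⟩ := Finite.exists_max c
    exact ⟨c i, hc i, c j, hc j, fun k => ⟨hi k, hj k⟩⟩

lemma list_prod_map_mem_Ioc {ι : Type*} {g : ι → ℝ} (hg : ∀ i, g i ∈ Ioo (0 : ℝ) 1) (w : List ι) :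
    (w.map g).prod ∈ Ioc 0 1 := by
  induction w with
  | nil => simp
  | cons i w ih =>
    rw [List.map_cons, List.prod_cons]
    exact ⟨mul_pos (hg i).1 ih.1, mul_le_one₀ (hg i).2.le ih.1.le ih.2⟩

namespace MoranData

section Words

variable {ι : Type*} (M : MoranData ι) (w : List ι) {x y : ℝ}

/-- The mass of the rectangle of a word. -/
noncomputable def mass : ℝ := (w.map M.P).prod

/-- The width of the rectangle of a word. -/
noncomputable def width : ℝ := (w.map M.a).prod

/-- The height of the rectangle of a word. -/
noncomputable def height : ℝ := (w.map M.b).prod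

/-- The longest side of the rectangle of a word. -/
noncomputable def long : ℝ := max (M.width w) (M.height w)

/-- The shortest side of the rectangle of a word. -/
noncomputable def short : ℝ := min (M.width w) (M.height w)

/-- The quantity attached to the longest side of the rectangle of a word, given the quantities `x`
attached to the horizontal and `y` attached to the vertical direction; a square is treated as
horizontal. -/
noncomputable def atLong {α : Type*} (x y : α) : α := if M.height w ≤ M.width w then x else y

/-- The data whose masses are the `q`-th powers of the given ones. -/
@[simps] noncomputable def rpow (q : ℝ) : MoranData ι where
  P i := M.P i ^ q
  a := M.a
  b := M.b
  P_pos i := Real.rpow_pos_of_pos (M.P_pos i) q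
  a_mem := M.a_mem
  b_mem := M.b_mem

lemma mass_cons (i : ι) : M.mass (i :: w) = M.P i * M.mass w := List.prod_cons

lemma width_cons (i : ι) : M.width (i :: w) = M.a i * M.width w := List.prod_cons

lemma height_cons (i : ι) : M.height (i :: w) = M.b i * M.height w := List.prod_cons

lemma mass_pos : 0 < M.mass w := List.prod_pos (by simpa using fun i _ => M.P_pos i)

lemma width_mem : M.width w ∈ Ioc 0 1 := list_prod_map_mem_Ioc M.a_mem w

lemma height_mem : M.height w ∈ Ioc 0 1 := list_prod_map_mem_Ioc M.b_mem w

lemma long_mem : M.long w ∈ Ioc 0 1 :=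
  ⟨lt_max_of_lt_left (M.width_mem w).1, max_le (M.width_mem w).2 (M.height_mem w).2⟩

lemma short_pos : 0 < M.short w := lt_min (M.width_mem w).1 (M.height_mem w).1

lemma short_le_long : M.short w ≤ M.long w := min_le_max

lemma mass_rpow (q : ℝ) : (M.rpow q).mass w = M.mass w ^ q :=
  Real.list_prod_map_rpow' w M.P (fun i _ => (M.P_pos i).le) q

lemma prod_map_weight :
    (w.map (M.weight x y)).prod = M.mass w * M.width w ^ x * M.height w ^ y := by
  rw [mass, width, height, ← Real.list_prod_map_rpow' w M.a (fun i _ => (M.a_mem i).1.le),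
    ← Real.list_prod_map_rpow' w M.b (fun i _ => (M.b_mem i).1.le), ← List.prod_map_mul,
    ← List.prod_map_mul]
  rfl

lemma width_rpow_mul_height_rpow :
    M.width w ^ x * M.height w ^ y = M.long w ^ M.atLong w x y * M.short w ^ M.atLong w y x := by
  unfold atLong long short
  split_ifs with h
  · rw [max_eq_left h, min_eq_right h]
  · rw [max_eq_right (not_le.1 h).le, min_eq_left (not_le.1 h).le, mul_comm]

lemma atLong_add_atLong : M.atLong w x y + M.atLong w y x = x + y := by
  unfold atLong
  split_ifs
  · rfl
  · exact add_comm y x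

variable {M}

lemma short_le_pow_length {ρ : ℝ} (ha : ∀ i, M.a i ≤ ρ) : M.short w ≤ ρ ^ w.length :=
  (min_le_left _ _).trans <| by
    simpa [width] using List.prod_map_le_prod_map₀ (s := w) M.a (fun _ => ρ)
      (fun i _ => (M.a_mem i).1.le) fun i _ => ha i

lemma mul_short_dropLast_le_short {r : ℝ} (ha : ∀ i, r ≤ M.a i) (hb : ∀ i, r ≤ M.b i)
    (hw : w ≠ []) : r * M.short w.dropLast ≤ M.short w := by
  obtain ⟨v, i, rfl⟩ := List.eq_nil_or_concat' w |>.resolve_left hw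
  have key {c g : ℝ} (hs : M.short v ≤ g) (hc : r ≤ c) (hc₀ : 0 < c) :
      r * M.short v ≤ g * c := by
    rw [mul_comm g]
    exact mul_le_mul hc hs (M.short_pos v).le hc₀.le
  rw [List.dropLast_concat]
  refine le_min ?_ ?_
  · simpa [width] using key (min_le_left _ _) (ha i) (M.a_mem i).1
  · simpa [height] using key (min_le_right _ _) (hb i) (M.b_mem i).1

end Words

variable {ι : Type*} [Fintype ι] {M : MoranData ι}

/-- `K` is a family of stopping words at scale `δ`: the words for which the shortest side of the
rectangle first drops to `δ`, up to a factor `r`. -/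
structure IsStopping (M : MoranData ι) (r δ : ℝ) (K : Finset (List ι)) : Prop where
  isCompletePrefixCode : IsCompletePrefixCode K
  mul_le_short : ∀ w ∈ K, r * δ ≤ M.short w
  short_le : ∀ w ∈ K, M.short w ≤ δ

lemma exists_isStopping (M : MoranData ι) :
    ∃ r ∈ Ioo (0 : ℝ) 1, ∀ δ ∈ Ioc (0 : ℝ) 1, ∃ K, M.IsStopping r δ K := by
  obtain ⟨r, hr, ρ, hρ, h⟩ := exists_Icc_subset_Ioo_of_finite (c := Sum.elim M.a M.b)
    (Sum.rec M.a_mem M.b_mem)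
  refine ⟨r, hr, fun δ hδ => ?_⟩
  obtain ⟨n, hn⟩ := exists_pow_lt_of_lt_one hδ.1 hρ.2
  obtain ⟨K, hK, hKs⟩ := IsCompletePrefixCode.exists_first (n := n)
    (p := fun w => M.short w ≤ δ) fun w hw =>
      (short_le_pow_length w fun i => (h (.inl i)).2).trans <|
        (pow_le_pow_of_le_one hρ.1.le hρ.2.le hw).trans hn.le
  refine ⟨K, hK, fun w hw => ?_, fun w hw => (hKs w hw).1⟩
  rcases eq_or_ne w [] with rfl | hne
  · simpa [short, width, height] using mul_le_one₀ hr.2.le hδ.1.le hδ.2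
  · refine le_trans ?_ (mul_short_dropLast_le_short w (fun i => (h (.inl i)).1)
      (fun i => (h (.inr i)).1) hne)
    exact mul_le_mul_of_nonneg_left (not_le.1 ((hKs w hw).2 hne)).le hr.1.le

end MoranData

/-! ### Packing and supports -/

lemma card_mul_pow_finrank_le_of_disjoint_balls {E κ : Type*} [NormedAddCommGroup E]
    [NormedSpace ℝ E] [FiniteDimensional ℝ E] {W : Finset κ} {c : κ → E} {x : E} {s R : ℝ}
    (hs : 0 < s) (hR : 0 < R)
    (hdisj : (W : Set κ).PairwiseDisjoint fun w => Metric.ball (c w) s)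
    (hsub : ∀ w ∈ W, Metric.ball (c w) s ⊆ Metric.ball x R) :
    W.card * s ^ Module.finrank ℝ E ≤ R ^ Module.finrank ℝ E := by
  borelize E
  set ν : Measure E := Measure.addHaar
  have hle : ν (⋃ w ∈ W, Metric.ball (c w) s) ≤ ν (Metric.ball x R) :=
    measure_mono (iUnion₂_subset hsub)
  rw [measure_biUnion_finset hdisj fun _ _ => Metric.isOpen_ball.measurableSet] at hle
  simp only [ν.addHaar_ball_of_pos _ hs, ν.addHaar_ball_of_pos _ hR, Finset.sum_const, nsmul_eq_mul,
    ← mul_assoc] at hle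
  rw [ENNReal.mul_le_mul_iff_left (Metric.measure_ball_pos _ _ one_pos).ne' measure_ball_lt_top.ne,
    ← ENNReal.ofReal_natCast, ← ENNReal.ofReal_mul (Nat.cast_nonneg _),
    ENNReal.ofReal_le_ofReal_iff (by positivity)] at hle
  exact hle

lemma exists_ball_subset_affine_image {m s z ℓ : ℝ} (hz : z ∈ Icc (0 : ℝ) 1) (hℓ : 0 < ℓ)
    (hm : ℓ ≤ |m|) :
    ∃ c, |c - (m * z + s)| ≤ ℓ / 2 ∧ Metric.ball c (ℓ / 2) ⊆ (fun x => m * x + s) '' Ioo 0 1 := by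
  obtain ⟨hz₀, hz₁⟩ := hz
  have hm₀ : 0 < |m| := hℓ.trans_le hm
  have hm' : m ≠ 0 := abs_pos.1 hm₀
  obtain ⟨t, ht₀, ht₁, htm⟩ : ∃ t > 0, t ≤ 1 ∧ t * |m| = ℓ :=
    ⟨ℓ / |m|, div_pos hℓ hm₀, (div_le_one hm₀).2 hm, div_mul_cancel₀ _ hm₀.ne'⟩
  refine ⟨m * (z + t * (1 / 2 - z)) + s, ?_, fun v hv => ?_⟩
  · have hcentre : |1 / 2 - z| ≤ 1 / 2 := abs_le.2 ⟨by linarith, by linarith⟩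
    calc |m * (z + t * (1 / 2 - z)) + s - (m * z + s)| = |m * t * (1 / 2 - z)| := by ring_nf
      _ = ℓ * |1 / 2 - z| := by rw [abs_mul, abs_mul, abs_of_pos ht₀, mul_comm |m|, htm]
      _ ≤ ℓ / 2 := by nlinarith
  · have hdist : |(v - s) / m - (z + t * (1 / 2 - z))| < t / 2 := by
      rw [show (v - s) / m - (z + t * (1 / 2 - z)) =
        (v - (m * (z + t * (1 / 2 - z)) + s)) / m by field_simp; ring, abs_div,
        div_lt_iff₀ hm₀, div_mul_eq_mul_div, htm]
      exact Real.dist_eq v _ ▸ hv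
    obtain ⟨hlow, hup⟩ := abs_lt.1 hdist
    refine ⟨(v - s) / m, ⟨?_, ?_⟩, by field_simp; ring⟩
    · nlinarith [mul_nonneg hz₀ (sub_nonneg.2 ht₁)]
    · nlinarith [mul_nonneg (sub_nonneg.2 hz₁) (sub_nonneg.2 ht₁)]

lemma measure_setOf_pos_eq_zero {X : Type*} [MeasurableSpace X] {ν : Measure X}
    [IsFiniteMeasure ν] {g : X → ℝ} (hg : Measurable g) {ρ : ℝ} (hρ₀ : 0 ≤ ρ) (hρ₁ : ρ < 1)
    (h : ∀ t > 0, ν {x | t < g x} ≤ ν {x | t < ρ * g x}) : ν {x | 0 < g x} = 0 := by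
  have hanti {t : ℝ} (ht : 0 < t) : Antitone fun n : ℕ => {x | t < ρ ^ n * g x} := by
    intro m n hmn x (hx : t < ρ ^ n * g x)
    have hgx : 0 < g x := pos_of_mul_pos_right (ht.trans hx) (by positivity)
    exact hx.trans_le (mul_le_mul_of_nonneg_right (pow_le_pow_of_le_one hρ₀ hρ₁.le hmn) hgx.le)
  have hempty {t : ℝ} (ht : 0 < t) : ⋂ n : ℕ, {x | t < ρ ^ n * g x} = ∅ := by
    refine eq_empty_of_forall_notMem fun x hx => ?_
    have hlim := (tendsto_pow_atTop_nhds_zero_of_lt_one hρ₀ hρ₁).mul_const (g x)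
    rw [zero_mul] at hlim
    obtain ⟨n, hn⟩ := (hlim.eventually_lt_const ht).exists
    exact hn.not_gt (mem_iInter.1 hx n)
  have hiter {t : ℝ} (ht : 0 < t) (n : ℕ) : ν {x | t < g x} ≤ ν {x | t < ρ ^ n * g x} := by
    induction n generalizing t with
    | zero => simp
    | succ n ih =>
      rcases hρ₀.eq_or_lt with rfl | hρ₀
      · simpa using h t ht
      · refine (h t ht).trans ?_
        simpa only [div_lt_iff₀' hρ₀, pow_succ', mul_assoc] using ih (div_pos ht hρ₀)
  have hzero {t : ℝ} (ht : 0 < t) : ν {x | t < g x} = 0 := by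
    have hlim := tendsto_measure_iInter_atTop (μ := ν) (s := fun n : ℕ => {x | t < ρ ^ n * g x})
      (fun n => (measurableSet_lt measurable_const (hg.const_mul _)).nullMeasurableSet)
      (hanti ht) ⟨0, measure_ne_top _ _⟩
    rw [hempty ht, measure_empty] at hlim
    exact le_antisymm (ge_of_tendsto' hlim (hiter ht)) bot_le
  have hunion : {x | 0 < g x} = ⋃ n : ℕ, {x | 1 / ((n : ℝ) + 1) < g x} := by
    ext x
    simp only [mem_iUnion]
    exact ⟨fun hx => exists_nat_one_div_lt (show 0 < g x from hx),
      fun ⟨n, hn⟩ => lt_trans (b := 1 / ((n : ℝ) + 1)) (by positivity) hn⟩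
  rw [hunion]
  exact measure_iUnion_null fun n => hzero (by positivity)

lemma measure_compl_eq_zero_of_selfSimilar {ι X : Type*} [Fintype ι] [PseudoMetricSpace X]
    [MeasurableSpace X] [BorelSpace X] {ν : Measure X} [IsFiniteMeasure ν] {f : ι → X → X}
    {p : ι → ENNReal} (hp : ∑ i, p i = 1) (hν : ν = ∑ i, p i • ν.map (f i)) {ρ : NNReal}
    (hρ : ρ < 1) (hf : ∀ i, LipschitzWith ρ (f i)) {K : Set X} (hK : IsClosed K)
    (hne : K.Nonempty) (hmaps : ∀ i, MapsTo (f i) K K) : ν Kᶜ = 0 := by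
  have hdist (i : ι) (x : X) : Metric.infDist (f i x) K ≤ ρ * Metric.infDist x K := by
    have hle (y : X) (hy : y ∈ K) : Metric.infDist (f i x) K ≤ ρ * dist x y :=
      (Metric.infDist_le_dist_of_mem (hmaps i hy)).trans ((hf i).dist_le_mul x y)
    rw [Metric.infDist_eq_iInf (x := x), Real.mul_iInf_of_nonneg ρ.coe_nonneg]
    have := hne.to_subtype
    exact le_ciInf fun y => hle y y.2
  have hcompl : Kᶜ = {x | 0 < Metric.infDist x K} := by
    ext x
    simp [hK.notMem_iff_infDist_pos hne]
  rw [hcompl]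
  refine measure_setOf_pos_eq_zero (Metric.continuous_infDist_pt K).measurable ρ.2
    (by exact_mod_cast hρ) fun t _ => ?_
  have hmeas : MeasurableSet {x | t < Metric.infDist x K} :=
    measurableSet_lt measurable_const (Metric.continuous_infDist_pt K).measurable
  calc ν {x | t < Metric.infDist x K}
      = ∑ i, p i * ν (f i ⁻¹' {x | t < Metric.infDist x K}) := by
        conv_lhs => rw [hν]
        simp only [Measure.coe_finsetSum, Finset.sum_apply, Measure.smul_apply, smul_eq_mul,
          Measure.map_apply (hf _).continuous.measurable hmeas]
    _ ≤ ∑ i, p i * ν {x | t < ρ * Metric.infDist x K} := by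
        gcongr with i
        exact fun x hx => hx.trans_le (hdist i x)
    _ = ν {x | t < ρ * Metric.infDist x K} := by rw [← Finset.sum_mul, hp, one_mul]

/-! ### Self-affine carpets -/

open LqGIFS.BoxLikeGIFS (unitSq)

/-- The closed unit square `[0,1]²`. -/
def closedUnitSq : Set (ℝ × ℝ) := Icc 0 1 ×ˢ Icc 0 1

lemma closure_unitSq : closure unitSq = closedUnitSq := by
  rw [unitSq, closure_prod_eq, closure_Ioo zero_ne_one, closedUnitSq]

/-- A self-affine measure for a box-like iterated function system with diagonal linear parts that
satisfies the rectangular open set condition; the diagonal entries `m i` and `n i` are signed, and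
`a i` and `b i` are their absolute values. -/
structure SelfAffineCarpet (ι : Type*) [Fintype ι] extends MoranData ι where
  m : ι → ℝ
  n : ι → ℝ
  tr : ι → ℝ × ℝ
  abs_m : ∀ i, |m i| = a i
  abs_n : ∀ i, |n i| = b i
  ψ : ι → ℝ × ℝ → ℝ × ℝ
  ψ_apply : ∀ i z, ψ i z = (m i * z.1 + (tr i).1, n i * z.2 + (tr i).2)
  image_subset : ∀ i, ψ i '' unitSq ⊆ unitSq
  disjoint_image : ∀ i j, i ≠ j → Disjoint (ψ i '' unitSq) (ψ j '' unitSq)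
  sum_P : ∑ i, P i = 1
  μ : Measure (ℝ × ℝ)
  isProbabilityMeasure : IsProbabilityMeasure μ
  invariant : μ = ∑ i, ENNReal.ofReal (P i) • μ.map (ψ i)

namespace SelfAffineCarpet

variable {ι : Type*} [Fintype ι] (S : SelfAffineCarpet ι)

instance : IsProbabilityMeasure S.μ := S.isProbabilityMeasure

lemma nonempty (S : SelfAffineCarpet ι) : Nonempty ι :=
  not_isEmpty_iff.1 fun _ => zero_ne_one' ℝ (by simpa using S.sum_P)

/-- The composition of the maps of the system along a word. -/
def wordMap : List ι → ℝ × ℝ → ℝ × ℝ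
  | [] => id
  | i :: w => S.ψ i ∘ wordMap w

lemma exists_wordMap_eq (w : List ι) : ∃ m n s t : ℝ, |m| = S.width w ∧ |n| = S.height w ∧
    ∀ z, S.wordMap w z = (m * z.1 + s, n * z.2 + t) := by
  induction w with
  | nil => exact ⟨1, 1, 0, 0, by simp [MoranData.width], by simp [MoranData.height],
      fun z => by simp [wordMap]⟩
  | cons i w ih =>
    obtain ⟨m, n, s, t, hm, hn, h⟩ := ih
    refine ⟨S.m i * m, S.n i * n, S.m i * s + (S.tr i).1, S.n i * t + (S.tr i).2, ?_, ?_,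
      fun z => ?_⟩
    · rw [abs_mul, hm, S.abs_m, S.width_cons]
    · rw [abs_mul, hn, S.abs_n, S.height_cons]
    · rw [wordMap, Function.comp_apply, h, S.ψ_apply, mul_add, mul_add, mul_assoc, mul_assoc,
        add_assoc, add_assoc]

lemma abs_wordMap_fst_sub (w : List ι) (z z' : ℝ × ℝ) :
    |(S.wordMap w z).1 - (S.wordMap w z').1| = S.width w * |z.1 - z'.1| := by
  obtain ⟨m, n, s, t, hm, -, h⟩ := S.exists_wordMap_eq w
  rw [h, h, ← hm, ← abs_mul, add_sub_add_right_eq_sub, mul_sub]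

lemma abs_wordMap_snd_sub (w : List ι) (z z' : ℝ × ℝ) :
    |(S.wordMap w z).2 - (S.wordMap w z').2| = S.height w * |z.2 - z'.2| := by
  obtain ⟨m, n, s, t, -, hn, h⟩ := S.exists_wordMap_eq w
  rw [h, h, ← hn, ← abs_mul, add_sub_add_right_eq_sub, mul_sub]

lemma continuous_ψ (i : ι) : Continuous (S.ψ i) := by
  rw [funext (S.ψ_apply i)]
  fun_prop

lemma wordMap_injective (w : List ι) : Function.Injective (S.wordMap w) := by
  intro z z' h
  have h₁ := S.abs_wordMap_fst_sub w z z'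
  have h₂ := S.abs_wordMap_snd_sub w z z'
  rw [h, sub_self, abs_zero, eq_comm, mul_eq_zero_iff_left (S.width_mem w).1.ne', abs_eq_zero,
    sub_eq_zero] at h₁
  rw [h, sub_self, abs_zero, eq_comm, mul_eq_zero_iff_left (S.height_mem w).1.ne', abs_eq_zero,
    sub_eq_zero] at h₂
  exact Prod.ext h₁ h₂

lemma image_wordMap_subset (w : List ι) : S.wordMap w '' unitSq ⊆ unitSq := by
  induction w with
  | nil => simp [wordMap]
  | cons i w ih =>
    rw [wordMap, image_comp]
    exact (image_mono ih).trans (S.image_subset i)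

lemma pairwiseDisjoint_image_wordMap {K : Finset (List ι)} (hK : IsCompletePrefixCode K) :
    (K : Set (List ι)).PairwiseDisjoint fun w => S.wordMap w '' unitSq := by
  induction hK with
  | singleton_nil => simp
  | node f _ ih =>
    intro w hw w' hw' hne
    obtain ⟨i, v, hv, rfl⟩ := IsCompletePrefixCode.mem_node.1 (Finset.mem_coe.1 hw)
    obtain ⟨j, v', hv', rfl⟩ := IsCompletePrefixCode.mem_node.1 (Finset.mem_coe.1 hw')
    simp only [Function.onFun, wordMap, image_comp]
    by_cases hij : i = j
    · subst hij
      exact (disjoint_image_iff (S.wordMap_injective [i])).2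
        (ih i hv hv' fun h => hne (congrArg _ h))
    · exact (S.disjoint_image i j hij).mono (image_mono (S.image_wordMap_subset v))
        (image_mono (S.image_wordMap_subset v'))

lemma measure_eq_sum {K : Finset (List ι)} (hK : IsCompletePrefixCode K) {s : Set (ℝ × ℝ)}
    (hs : MeasurableSet s) :
    S.μ s = ∑ w ∈ K, ENNReal.ofReal (S.mass w) * S.μ (S.wordMap w ⁻¹' s) := by
  induction hK generalizing s with
  | singleton_nil => simp [MoranData.mass, wordMap]
  | node f _ ih =>
    rw [IsCompletePrefixCode.sum_node]
    conv_lhs => rw [S.invariant]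
    simp only [Measure.coe_finsetSum, Finset.sum_apply, Measure.smul_apply, smul_eq_mul]
    refine Finset.sum_congr rfl fun i _ => ?_
    have hmeas := (S.continuous_ψ i).measurable
    rw [Measure.map_apply hmeas hs, ih i (hmeas hs), Finset.mul_sum]
    refine Finset.sum_congr rfl fun w _ => ?_
    rw [← mul_assoc, ← ENNReal.ofReal_mul (S.P_pos i).le, wordMap, preimage_comp, S.mass_cons]

lemma measure_compl_closedUnitSq : S.μ closedUnitSqᶜ = 0 := by
  obtain ⟨r, -, ρ, hρ, hρab⟩ := exists_Icc_subset_Ioo_of_finite (c := Sum.elim S.a S.b)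
    (Sum.rec S.a_mem S.b_mem)
  have hlip (i : ι) : LipschitzWith ⟨ρ, hρ.1.le⟩ (S.ψ i) := by
    refine LipschitzWith.of_dist_le_mul fun z z' => ?_
    change _ ≤ ρ * dist z z'
    simp only [S.ψ_apply, Prod.dist_eq, Real.dist_eq, add_sub_add_right_eq_sub, ← mul_sub, abs_mul,
      S.abs_m, S.abs_n, mul_max_of_nonneg _ _ hρ.1.le]
    gcongr
    · exact (hρab (.inl i)).2
    · exact (hρab (.inr i)).2
  have hsum : ∑ i, ENNReal.ofReal (S.P i) = 1 := by
    rw [← ENNReal.ofReal_sum_of_nonneg fun i _ => (S.P_pos i).le, S.sum_P, ENNReal.ofReal_one]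
  have hmaps (i : ι) : MapsTo (S.ψ i) closedUnitSq closedUnitSq := by
    rw [← closure_unitSq]
    exact (mapsTo_iff_image_subset.2 (S.image_subset i)).closure (S.continuous_ψ i)
  exact measure_compl_eq_zero_of_selfSimilar hsum S.invariant (by exact hρ.2) hlip
    (isClosed_Icc.prod isClosed_Icc) ⟨(0, 0), by simp [closedUnitSq]⟩ hmaps

lemma exists_ball_subset_image_wordMap {w : List ι} {ℓ : ℝ} (hℓ : 0 < ℓ) (hw : ℓ ≤ S.short w)
    {z : ℝ × ℝ} (hz : z ∈ closedUnitSq) :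
    ∃ c, dist c (S.wordMap w z) ≤ ℓ / 2 ∧ Metric.ball c (ℓ / 2) ⊆ S.wordMap w '' unitSq := by
  obtain ⟨m, n, s, t, hm, hn, h⟩ := S.exists_wordMap_eq w
  obtain ⟨c, hc, hcs⟩ := exists_ball_subset_affine_image (s := s) hz.1 hℓ
    (hm ▸ hw.trans (min_le_left _ _))
  obtain ⟨d, hd, hds⟩ := exists_ball_subset_affine_image (s := t) hz.2 hℓ
    (hn ▸ hw.trans (min_le_right _ _))
  refine ⟨(c, d), ?_, ?_⟩
  · rw [h]
    exact max_le hc hd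
  · rw [← ball_prod_same, funext h]
    exact (prod_mono hcs hds).trans (prodMap_image_prod _ _ _ _).superset

/-- The open rectangles of the words under consideration are disjoint, and each contains a ball of
radius comparable to `δ` close to the square. -/
lemma card_filter_meets_meshCube2_le {K : Finset (List ι)} {r δ : ℝ} (hK : S.IsStopping r δ K)
    (hr : r ∈ Ioo (0 : ℝ) 1) (hδ : 0 < δ) (k : ℤ × ℤ) :
    ((K.filter fun w => ∃ z ∈ closedUnitSq, S.wordMap w z ∈ meshCube2 δ k).card : ℝ) * r ^ 2 ≤
      9 := by
  set W := K.filter fun w => ∃ z ∈ closedUnitSq, S.wordMap w z ∈ meshCube2 δ k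
  set x : ℝ × ℝ := ((k.1 + 1 / 2) * δ, (k.2 + 1 / 2) * δ)
  have hball (w : List ι) : ∃ c, w ∈ W →
      Metric.ball c (r * δ / 2) ⊆ S.wordMap w '' unitSq ∧ dist c x < δ := by
    by_cases hw : w ∈ W
    swap
    · exact ⟨0, fun h => absurd h hw⟩
    obtain ⟨hwK, z, hz, hzk⟩ := Finset.mem_filter.1 hw
    obtain ⟨c, hc, hcs⟩ := S.exists_ball_subset_image_wordMap (mul_pos hr.1 hδ)
      (hK.mul_le_short w hwK) hz
    have hzx : dist (S.wordMap w z) x ≤ δ / 2 := by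
      obtain ⟨⟨_, _⟩, _, _⟩ := hzk
      refine max_le ?_ ?_ <;> rw [Real.dist_eq, abs_le] <;> constructor <;>
        simp only [x] <;> linarith
    exact ⟨c, fun _ => ⟨hcs, by nlinarith [dist_triangle c (S.wordMap w z) x, hr.2]⟩⟩
  choose c hc using hball
  have hdisj : (W : Set (List ι)).PairwiseDisjoint fun w => Metric.ball (c w) (r * δ / 2) :=
    fun w hw w' hw' hne => (S.pairwiseDisjoint_image_wordMap hK.isCompletePrefixCode
      (Finset.mem_of_mem_filter w hw) (Finset.mem_of_mem_filter w' hw') hne).mono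
      (hc w hw).1 (hc w' hw').1
  have hsub : ∀ w ∈ W, Metric.ball (c w) (r * δ / 2) ⊆ Metric.ball x (3 * δ / 2) :=
    fun w hw => Metric.ball_subset_ball' (by nlinarith [(hc w hw).2, hr.2])
  have h := card_mul_pow_finrank_le_of_disjoint_balls (by have := hr.1; positivity)
    (by positivity) hdisj hsub
  rw [Module.finrank_prod, Module.finrank_self] at h
  refine le_of_mul_le_mul_right (?_ : _ * (δ / 2) ^ 2 ≤ _ * (δ / 2) ^ 2) (by positivity)
  linear_combination h

end SelfAffineCarpet

/-! ### Moment sums -/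

section MomentSum

open scoped ENNReal

variable {κ κ' : Type*} {q : ℝ} {f : κ → ℝ≥0∞} {g : κ' → ℝ≥0∞}

/-- The `q`-th moment sum of a family of masses, the zero masses being left out; this is the
extended-real form of the sums `D_δ^q`. -/
noncomputable def momentSum (q : ℝ) (f : κ → ℝ≥0∞) : ℝ≥0∞ :=
  ∑' k, if f k = 0 then 0 else f k ^ q

lemma toReal_momentSum (hq : 0 ≤ q) (hf : ∀ k, f k ≠ ∞) :
    (momentSum q f).toReal = ∑' k, if f k = 0 then 0 else (f k).toReal ^ q := by
  rw [momentSum, ENNReal.tsum_toReal_eq fun k => ?_]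
  · simp only [apply_ite ENNReal.toReal, ENNReal.toReal_zero, ENNReal.toReal_rpow]
  · split_ifs
    exacts [ENNReal.zero_ne_top, ENNReal.rpow_ne_top_of_nonneg hq (hf k)]

lemma Dq1_eq_toReal (ν : Measure ℝ) [IsFiniteMeasure ν] (hq : 0 ≤ q) (δ : ℝ) :
    Dq1 ν δ q = (momentSum q fun k => ν (meshCube1 δ k)).toReal :=
  (toReal_momentSum hq fun _ => measure_ne_top ν _).symm

lemma Dq2_eq_toReal (ν : Measure (ℝ × ℝ)) [IsFiniteMeasure ν] (hq : 0 ≤ q) (δ : ℝ) :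
    Dq2 ν δ q = (momentSum q fun k => ν (meshCube2 δ k)).toReal :=
  (toReal_momentSum hq fun _ => measure_ne_top ν _).symm

lemma momentSum_const_mul {c : ℝ≥0∞} (hc : c ≠ 0) :
    momentSum q (fun k => c * f k) = c ^ q * momentSum q f := by
  rw [momentSum, momentSum, ← ENNReal.tsum_mul_left]
  refine tsum_congr fun k => ?_
  by_cases hf : f k = 0
  · simp [hf]
  · rw [if_neg (mul_ne_zero hc hf), if_neg hf, ENNReal.mul_rpow_of_ne_zero hc hf]

lemma momentSum_prod_finset {α : Type*} (K : Finset α) (F : α → κ → ℝ≥0∞) :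
    momentSum q (fun x : K × κ => F x.1 x.2) = ∑ w ∈ K, momentSum q (F w) := by
  rw [momentSum, ENNReal.tsum_prod', tsum_fintype]
  exact Finset.sum_coe_sort K fun w => momentSum q (F w)

lemma tsum_le_mul_of_encard_le {s : Set κ} {m : ℕ} (hs : s.encard ≤ m) {c : ℝ≥0∞}
    (hf : ∀ j ∈ s, f j ≤ c) : ∑' j : s, f j ≤ m * c :=
  calc ∑' j : s, f j ≤ ∑' _ : s, c := ENNReal.tsum_le_tsum fun j => hf j j.2
    _ = s.encard * c := ENNReal.tsum_set_const s c
    _ ≤ m * c := by gcongr; exact_mod_cast ENat.toENNReal_mono hs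

/-- The largest term dominates a sum of at most `m` terms up to the factor `m`, which is why no
convexity in `q` is needed. -/
lemma ite_rpow_le_mul_tsum (hq : 0 ≤ q) {s : Set κ} {m : ℕ} (hs : s.encard ≤ m) {x : ℝ≥0∞}
    (hx : x ≤ ∑' j : s, f j) :
    (if x = 0 then 0 else x ^ q) ≤ m ^ q * ∑' j : s, if f j = 0 then 0 else f j ^ q := by
  by_cases hx0 : x = 0
  · simp [hx0]
  have hne : s.Nonempty := by
    by_contra! h
    subst h
    exact hx0 (by simpa using hx)
  obtain ⟨j, hj, hmax⟩ := exists_max_image s f (Set.finite_of_encard_le_coe hs) hne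
  have hxj : x ≤ m * f j := hx.trans (tsum_le_mul_of_encard_le hs hmax)
  have hfj : f j ≠ 0 := fun h => hx0 (by simpa [h] using hxj)
  calc (if x = 0 then 0 else x ^ q) = x ^ q := if_neg hx0
    _ ≤ (m * f j) ^ q := ENNReal.rpow_le_rpow hxj hq
    _ = m ^ q * (if f j = 0 then 0 else f j ^ q) := by
      rw [ENNReal.mul_rpow_of_nonneg _ _ hq, if_neg hfj]
    _ ≤ _ := by
      gcongr
      exact ENNReal.le_tsum (f := fun j : s => if f j = 0 then 0 else f j ^ q) ⟨j, hj⟩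

lemma momentSum_le (hq : 0 ≤ q) {R : κ → κ' → Prop} {m n : ℕ}
    (hm : ∀ i, {j | R i j}.encard ≤ m) (hn : ∀ j, {i | R i j}.encard ≤ n)
    (hfg : ∀ i, f i ≤ ∑' j : {j | R i j}, g j) :
    momentSum q f ≤ m ^ q * n * momentSum q g := by
  set G : κ' → ℝ≥0∞ := fun j => if g j = 0 then 0 else g j ^ q
  have hswap (i : κ) (j : κ') :
      {j | R i j}.indicator G j = {i | R i j}.indicator (fun _ => G j) i :=
    rfl
  calc momentSum q f ≤ ∑' i, m ^ q * ∑' j : {j | R i j}, G j :=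
        ENNReal.tsum_le_tsum fun i => ite_rpow_le_mul_tsum hq (hm i) (hfg i)
    _ = m ^ q * ∑' j, ∑' _ : {i | R i j}, G j := by
      rw [ENNReal.tsum_mul_left]
      simp only [tsum_subtype, hswap]
      rw [ENNReal.tsum_comm]
      simp only [← tsum_subtype]
    _ ≤ m ^ q * ∑' j, n * G j := by
      gcongr with j
      exact tsum_le_mul_of_encard_le (hn j) fun _ _ => le_rfl
    _ = m ^ q * n * momentSum q g := by rw [ENNReal.tsum_mul_left, mul_assoc, momentSum]

end MomentSum

/-! ### Mesh cubes -/

section Mesh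

open scoped ENNReal

variable {δ : ℝ}

lemma measurableSet_meshCube1 (δ : ℝ) (k : ℤ) : MeasurableSet (meshCube1 δ k) := measurableSet_Icc

lemma measurableSet_meshCube2 (δ : ℝ) (k : ℤ × ℤ) : MeasurableSet (meshCube2 δ k) :=
  (measurableSet_meshCube1 δ k.1).prod (measurableSet_meshCube1 δ k.2)

lemma exists_mem_meshCube1 (hδ : 0 < δ) (x : ℝ) : ∃ k : ℤ, x ∈ meshCube1 δ k :=
  ⟨⌊x / δ⌋, (le_div_iff₀ hδ).1 (Int.floor_le _), (div_le_iff₀ hδ).1 (Int.lt_floor_add_one _).le⟩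

lemma exists_mem_meshCube2 (hδ : 0 < δ) (z : ℝ × ℝ) : ∃ k : ℤ × ℤ, z ∈ meshCube2 δ k := by
  obtain ⟨k, hk⟩ := exists_mem_meshCube1 hδ z.1
  obtain ⟨l, hl⟩ := exists_mem_meshCube1 hδ z.2
  exact ⟨(k, l), hk, hl⟩

lemma sub_le_of_mem_meshCube1 {x y : ℝ} {k : ℤ} (hx : x ∈ meshCube1 δ k)
    (hy : y ∈ meshCube1 δ k) : x - y ≤ δ := by
  linarith [hx.2, hy.1]

lemma dist_le_of_mem_meshCube2 {z z' : ℝ × ℝ} {k : ℤ × ℤ} (hz : z ∈ meshCube2 δ k)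
    (hz' : z' ∈ meshCube2 δ k) : dist z z' ≤ δ :=
  max_le (abs_sub_le_iff.2 ⟨sub_le_of_mem_meshCube1 hz.1 hz'.1, sub_le_of_mem_meshCube1 hz'.1 hz.1⟩)
    (abs_sub_le_iff.2 ⟨sub_le_of_mem_meshCube1 hz.2 hz'.2, sub_le_of_mem_meshCube1 hz'.2 hz.2⟩)

lemma encard_le_of_forall_le_add {T : Set ℤ} {n : ℕ} (hT : ∀ k ∈ T, ∀ l ∈ T, k ≤ l + n) :
    T.encard ≤ (n + 1 : ℕ) := by
  rcases T.eq_empty_or_nonempty with rfl | ⟨k, hk⟩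
  · simp
  obtain ⟨l, hl, hmin⟩ := Int.exists_least_of_bdd (P := (· ∈ T))
    ⟨k - n, fun l hl => by linarith [hT k hk l hl]⟩ ⟨k, hk⟩
  calc T.encard ≤ (Finset.Icc l (l + n) : Set ℤ).encard :=
        Set.encard_le_encard fun i hi => by simpa using ⟨hmin i hi, hT i hi l hl⟩
    _ = (n + 1 : ℕ) := by
      rw [Set.encard_coe_eq_coe_finsetCard, Int.card_Icc]
      congr 1
      omega

lemma encard_setOf_meets_meshCube1_le (hδ : 0 < δ) {s : Set ℝ} {n : ℕ}
    (hs : ∀ x ∈ s, ∀ y ∈ s, x - y ≤ n * δ) :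
    {k | ∃ x ∈ s, x ∈ meshCube1 δ k}.encard ≤ (n + 2 : ℕ) := by
  refine encard_le_of_forall_le_add (n := n + 1) ?_
  rintro k ⟨x, hx, hxk⟩ l ⟨y, hy, hyl⟩
  have h : (k : ℝ) * δ ≤ (l + (n + 1 : ℕ)) * δ := by
    push_cast
    linarith [hs x hx y hy, hxk.1, hyl.2]
  exact_mod_cast le_of_mul_le_mul_right h hδ

lemma encard_setOf_meets_meshCube2_le (hδ : 0 < δ) {s : Set (ℝ × ℝ)} {n : ℕ}
    (hs : ∀ z ∈ s, ∀ z' ∈ s, dist z z' ≤ n * δ) :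
    {k | ∃ z ∈ s, z ∈ meshCube2 δ k}.encard ≤ ((n + 2) * (n + 2) : ℕ) := by
  have h₁ := encard_setOf_meets_meshCube1_le hδ (s := Prod.fst '' s) (n := n) <| by
    rintro _ ⟨z, hz, rfl⟩ _ ⟨z', hz', rfl⟩
    exact (le_abs_self _).trans ((le_max_left _ _).trans (hs z hz z' hz'))
  have h₂ := encard_setOf_meets_meshCube1_le hδ (s := Prod.snd '' s) (n := n) <| by
    rintro _ ⟨z, hz, rfl⟩ _ ⟨z', hz', rfl⟩
    exact (le_abs_self _).trans ((le_max_right _ _).trans (hs z hz z' hz'))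
  calc {k | ∃ z ∈ s, z ∈ meshCube2 δ k}.encard
      ≤ ({k | ∃ x ∈ Prod.fst '' s, x ∈ meshCube1 δ k} ×ˢ
          {k | ∃ x ∈ Prod.snd '' s, x ∈ meshCube1 δ k}).encard :=
        Set.encard_le_encard fun k ⟨z, hz, hzk⟩ =>
          ⟨⟨z.1, mem_image_of_mem _ hz, hzk.1⟩, z.2, mem_image_of_mem _ hz, hzk.2⟩
    _ ≤ (n + 2 : ℕ) * (n + 2 : ℕ) := Set.encard_prod.trans_le (mul_le_mul' h₁ h₂)
    _ = ((n + 2) * (n + 2) : ℕ) := (Nat.cast_mul _ _).symm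

lemma encard_le_mul_of_encard_fiber_le {α β : Type*} {s : Set (α × β)} {t : Finset α} {n : ℕ}
    (hst : ∀ x ∈ s, x.1 ∈ t) (hn : ∀ a, {b | (a, b) ∈ s}.encard ≤ n) :
    s.encard ≤ (t.card * n : ℕ) := by
  have hsub : s ⊆ ⋃ a ∈ t, Prod.mk a '' {b | (a, b) ∈ s} := fun x hx =>
    mem_iUnion₂.2 ⟨x.1, hst x hx, x.2, hx, rfl⟩
  calc s.encard ≤ ∑ a ∈ t, (Prod.mk a '' {b | (a, b) ∈ s}).encard :=
        (Set.encard_le_encard hsub).trans (Finset.set_encard_biUnion_le t _)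
    _ ≤ ∑ _a ∈ t, (n : ℕ∞) :=
        Finset.sum_le_sum fun a _ => (Set.encard_image_le _ _).trans (hn a)
    _ = (t.card * n : ℕ) := by simp

lemma measure_le_tsum_of_cover {Ω ι : Type*} [MeasurableSpace Ω] {μ : Measure Ω} [Countable ι]
    {X A : Set Ω} (hX : μ Xᶜ = 0) {s : Set ι} {B : ι → Set Ω}
    (h : ∀ z ∈ X, z ∈ A → ∃ i ∈ s, z ∈ B i) : μ A ≤ ∑' i : s, μ (B i) := by
  have hsub : A ⊆ Xᶜ ∪ ⋃ i : s, B i := fun z hz => (em (z ∈ X)).symm.imp id fun hzX => by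
    simpa using h z hzX hz
  calc μ A ≤ μ Xᶜ + μ (⋃ i : s, B i) := (measure_mono hsub).trans (measure_union_le _ _)
    _ ≤ ∑' i : s, μ (B i) := by
      rw [hX, zero_add]
      exact measure_iUnion_le _

end Mesh

/-! ### Comparison up to subpolynomial factors -/

section Subpoly

variable {f g h : ℝ → ℝ} {τ : ℝ}

/-- `f` is bounded by `g` up to factors that are subpolynomial in the scale as it tends to `0`. -/
def SubpolyLE (f g : ℝ → ℝ) : Prop :=
  ∀ ε : ℝ, 0 < ε → ∀ᶠ δ in 𝓝[>] 0, f δ ≤ δ ^ (-ε) * g δ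

lemma SubpolyLE.of_exists_const (hg : ∀ᶠ δ in 𝓝[>] 0, 0 ≤ g δ)
    (hfg : ∀ ε : ℝ, 0 < ε → ∃ C, ∀ᶠ δ in 𝓝[>] 0, f δ ≤ C * δ ^ (-ε) * g δ) : SubpolyLE f g := by
  intro ε hε
  obtain ⟨C, hC⟩ := hfg (ε / 2) (half_pos hε)
  have hlarge : ∀ᶠ δ : ℝ in 𝓝[>] 0, C ≤ δ ^ (-(ε / 2)) :=
    (tendsto_rpow_neg_nhdsGT_zero (neg_lt_zero.2 (half_pos hε))).eventually_ge_atTop C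
  filter_upwards [hC, hg, hlarge, self_mem_nhdsWithin] with δ hfδ hgδ hCδ (hδ : 0 < δ)
  calc f δ ≤ C * δ ^ (-(ε / 2)) * g δ := hfδ
    _ ≤ δ ^ (-(ε / 2)) * δ ^ (-(ε / 2)) * g δ := by gcongr
    _ = δ ^ (-ε) * g δ := by rw [← Real.rpow_add hδ]; ring_nf

lemma SubpolyLE.trans (hfg : SubpolyLE f g) (hgh : SubpolyLE g h) : SubpolyLE f h := by
  intro ε hε
  filter_upwards [hfg _ (half_pos hε), hgh _ (half_pos hε), self_mem_nhdsWithin]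
    with δ hfg hgh (hδ : 0 < δ)
  calc f δ ≤ δ ^ (-(ε / 2)) * (δ ^ (-(ε / 2)) * h δ) := hfg.trans (by gcongr)
    _ = δ ^ (-ε) * h δ := by rw [← mul_assoc, ← Real.rpow_add hδ]; ring_nf

lemma tendsto_log_div_neg_log_iff (hf : ∀ᶠ δ in 𝓝[>] 0, 0 < f δ) :
    Tendsto (fun δ => Real.log (f δ) / (-Real.log δ)) (𝓝[>] 0) (𝓝 τ) ↔
      SubpolyLE f (fun δ => δ ^ (-τ)) ∧ SubpolyLE (fun δ => δ ^ (-τ)) f := by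
  have hlog : ∀ᶠ δ : ℝ in 𝓝[>] 0, 0 < δ ∧ 0 < -Real.log δ := by
    filter_upwards [Ioo_mem_nhdsGT (zero_lt_one (α := ℝ))] with δ hδ
    exact ⟨hδ.1, neg_pos.2 (Real.log_neg hδ.1 hδ.2)⟩
  have hupper {δ ε : ℝ} (hδ : 0 < δ ∧ 0 < -Real.log δ) (hfδ : 0 < f δ) :
      f δ ≤ δ ^ (-ε) * δ ^ (-τ) ↔ Real.log (f δ) / (-Real.log δ) ≤ τ + ε := by
    rw [← Real.rpow_add hδ.1, Real.rpow_def_of_pos hδ.1, ← Real.log_le_iff_le_exp hfδ,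
      div_le_iff₀ hδ.2]
    ring_nf
  have hlower {δ ε : ℝ} (hδ : 0 < δ ∧ 0 < -Real.log δ) (hfδ : 0 < f δ) :
      δ ^ (-τ) ≤ δ ^ (-ε) * f δ ↔ τ - ε ≤ Real.log (f δ) / (-Real.log δ) := by
    rw [Real.rpow_neg hδ.1.le ε, ← div_eq_inv_mul, le_div_iff₀ (Real.rpow_pos_of_pos hδ.1 _),
      ← Real.rpow_add hδ.1, Real.rpow_def_of_pos hδ.1, ← Real.le_log_iff_exp_le hfδ,
      le_div_iff₀ hδ.2]
    ring_nf
  constructor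
  · intro h
    constructor <;> intro ε hε
    · filter_upwards [h.eventually_le_const (lt_add_of_pos_right τ hε), hlog, hf]
        with δ h hδ hfδ using (hupper hδ hfδ).2 h
    · filter_upwards [h.eventually_const_le (sub_lt_self τ hε), hlog, hf]
        with δ h hδ hfδ using (hlower hδ hfδ).2 h
  · rintro ⟨hle, hge⟩
    refine tendsto_order.2 ⟨fun a ha => ?_, fun a ha => ?_⟩
    · filter_upwards [hge ((τ - a) / 2) (by linarith), hlog, hf] with δ h hδ hfδ
      linarith [(hlower hδ hfδ).1 h]
    · filter_upwards [hle ((a - τ) / 2) (by linarith), hlog, hf] with δ h hδ hfδ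
      linarith [(hupper hδ hfδ).1 h]

lemma SubpolyLE.exists_forall_le (hfg : SubpolyLE f g) (hg : ∀ δ > 0, 0 ≤ g δ) {R : ℝ}
    (hb : ∀ r₀ > 0, ∃ C, ∀ δ ∈ Icc r₀ R, f δ ≤ C * g δ) {ε : ℝ} (hε : 0 < ε) :
    ∃ C > 0, ∀ δ ∈ Ioc 0 R, f δ ≤ C * δ ^ (-ε) * g δ := by
  obtain ⟨r₀, hr₀, hsub⟩ := mem_nhdsGT_iff_exists_Ioc_subset.1 (hfg ε hε)
  obtain ⟨C, hC⟩ := hb r₀ hr₀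
  refine ⟨max 1 (C * R ^ ε), by positivity, fun δ hδ => ?_⟩
  rcases le_total δ r₀ with hle | hle
  · refine (hsub ⟨hδ.1, hle⟩ : f δ ≤ δ ^ (-ε) * g δ).trans ?_
    rw [mul_assoc]
    exact le_mul_of_one_le_left (mul_nonneg (Real.rpow_nonneg hδ.1.le _) (hg δ hδ.1))
      (le_max_left _ _)
  · refine (hC δ ⟨hle, hδ.2⟩).trans (mul_le_mul_of_nonneg_right ?_ (hg δ hδ.1))
    have hpow : 0 < δ ^ ε := Real.rpow_pos_of_pos hδ.1 _
    rw [Real.rpow_neg hδ.1.le, ← div_eq_mul_inv, le_div_iff₀ hpow]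
    rcases le_total C 0 with hC₀ | hC₀
    · exact (mul_nonpos_of_nonpos_of_nonneg hC₀ hpow.le).trans (by positivity)
    · refine le_max_of_le_right ?_
      gcongr
      exacts [hδ.1.le, hδ.2]

end Subpoly

/-! ### Moment sums on the line -/

section Line

open scoped ENNReal

variable {ν : Measure ℝ} [IsProbabilityMeasure ν] {q : ℝ}

lemma encard_setOf_unitInterval_meets_le {δ : ℝ} (hδ : 0 < δ) {n : ℕ} (hn : 1 ≤ n * δ) :
    {k | ∃ x ∈ Icc (0 : ℝ) 1, x ∈ meshCube1 δ k}.encard ≤ (n + 2 : ℕ) :=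
  encard_setOf_meets_meshCube1_le hδ fun x hx y hy => by linarith [hx.2, hy.1]

lemma momentSum_meshCube1_le (hq : 0 ≤ q) (hν : ν (Icc 0 1)ᶜ = 0) {δ : ℝ} (hδ : 0 < δ) {n : ℕ}
    (hn : 1 ≤ n * δ) : momentSum q (fun k => ν (meshCube1 δ k)) ≤ (n + 2 : ℕ) := by
  simpa [momentSum] using momentSum_le hq (f := fun k => ν (meshCube1 δ k))
    (g := fun _ : Unit => ν univ) (R := fun k _ => ∃ x ∈ Icc (0 : ℝ) 1, x ∈ meshCube1 δ k)
    (m := 1) (n := n + 2) (fun _ => Set.encard_le_one_iff.2 fun _ _ _ _ => rfl)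
    (fun _ => encard_setOf_unitInterval_meets_le hδ hn)
    fun k => measure_le_tsum_of_cover (B := fun _ => univ) hν fun z hz hzk =>
      ⟨(), ⟨z, hz, hzk⟩, mem_univ z⟩

lemma one_le_mul_momentSum_meshCube1 (hq : 0 ≤ q) (hν : ν (Icc 0 1)ᶜ = 0) {δ : ℝ} (hδ : 0 < δ)
    {n : ℕ} (hn : 1 ≤ n * δ) :
    1 ≤ ((n + 2 : ℕ) : ℝ≥0∞) ^ q * momentSum q (fun k => ν (meshCube1 δ k)) := by
  simpa [momentSum] using momentSum_le hq (f := fun _ : Unit => ν univ)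
    (g := fun k => ν (meshCube1 δ k)) (R := fun _ k => ∃ x ∈ Icc (0 : ℝ) 1, x ∈ meshCube1 δ k)
    (m := n + 2) (n := 1) (fun _ => encard_setOf_unitInterval_meets_le hδ hn)
    (fun _ => Set.encard_le_one_iff.2 fun _ _ _ _ => rfl)
    fun _ => measure_le_tsum_of_cover (B := meshCube1 δ) hν fun z hz _ =>
      (exists_mem_meshCube1 hδ z).imp fun k hk => ⟨⟨z, hz, hk⟩, hk⟩

lemma momentSum_meshCube1_ne_top (hq : 0 ≤ q) (hν : ν (Icc 0 1)ᶜ = 0) {δ : ℝ} (hδ : 0 < δ) :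
    momentSum q (fun k => ν (meshCube1 δ k)) ≠ ∞ := by
  have hn : 1 ≤ ⌈1 / δ⌉₊ * δ := (div_le_iff₀ hδ).1 (Nat.le_ceil _)
  exact ne_top_of_le_ne_top (ENNReal.natCast_ne_top _) (momentSum_meshCube1_le hq hν hδ hn)

lemma exists_Dq1_bounds (hq : 0 ≤ q) (hν : ν (Icc 0 1)ᶜ = 0) {r₀ : ℝ} (hr₀ : 0 < r₀) :
    ∃ C > 0, ∀ δ ≥ r₀, Dq1 ν δ q ≤ C ∧ 1 ≤ C * Dq1 ν δ q := by
  set n := ⌈1 / r₀⌉₊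
  refine ⟨max (n + 2 : ℕ) ((n + 2 : ℕ) ^ q), by positivity, fun δ hδ => ?_⟩
  have hδ₀ : 0 < δ := hr₀.trans_le hδ
  have hn : 1 ≤ n * δ := ((div_le_iff₀ hr₀).1 (Nat.le_ceil _)).trans (by gcongr)
  rw [Dq1_eq_toReal ν hq]
  constructor
  · refine le_max_of_le_left ?_
    rw [← ENNReal.toReal_natCast]
    exact ENNReal.toReal_mono (ENNReal.natCast_ne_top _) (momentSum_meshCube1_le hq hν hδ₀ hn)
  · have h := ENNReal.toReal_mono (ENNReal.mul_ne_top (ENNReal.rpow_ne_top_of_nonneg hq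
      (ENNReal.natCast_ne_top _)) (momentSum_meshCube1_ne_top hq hν hδ₀))
      (one_le_mul_momentSum_meshCube1 hq hν hδ₀ hn)
    rw [ENNReal.toReal_mul, ← ENNReal.toReal_rpow, ENNReal.toReal_natCast,
      ENNReal.toReal_one] at h
    exact h.trans (mul_le_mul_of_nonneg_right (le_max_right _ _) ENNReal.toReal_nonneg)

lemma Dq1_pos (hq : 0 ≤ q) (hν : ν (Icc 0 1)ᶜ = 0) {δ : ℝ} (hδ : 0 < δ) : 0 < Dq1 ν δ q := by
  obtain ⟨C, hC, h⟩ := exists_Dq1_bounds hq hν hδ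
  exact pos_of_mul_pos_right (zero_lt_one.trans_le (h δ le_rfl).2) hC.le

lemma exists_rpow_le {r₀ : ℝ} (hr₀ : 0 < r₀) (R s : ℝ) :
    ∃ B : ℝ, ∀ δ ∈ Icc r₀ R, δ ^ s ≤ B :=
  (isCompact_Icc.bddAbove_image fun δ hδ => (Real.continuousAt_rpow_const δ s
    (Or.inl (hr₀.trans_le hδ.1).ne')).continuousWithinAt).imp fun _ hB δ hδ => hB ⟨δ, hδ, rfl⟩

lemma exists_bounds_of_hasLq1 {τ : ℝ} (hτ : HasLq1 ν q τ) (hq : 0 ≤ q) (hν : ν (Icc 0 1)ᶜ = 0)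
    (R : ℝ) {ε : ℝ} (hε : 0 < ε) :
    ∃ C > 0, ∀ δ ∈ Ioc 0 R, Dq1 ν δ q ≤ C * δ ^ (-ε) * δ ^ (-τ) ∧
      δ ^ (-τ) ≤ C * δ ^ (-ε) * Dq1 ν δ q := by
  obtain ⟨hle, hge⟩ := (tendsto_log_div_neg_log_iff
    (eventually_mem_nhdsWithin.mono fun δ hδ => Dq1_pos hq hν hδ)).1 hτ
  obtain ⟨C₁, hC₁, h₁⟩ := hle.exists_forall_le (fun δ hδ => Real.rpow_nonneg (le_of_lt hδ) _)
    (fun r₀ hr₀ => by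
      obtain ⟨C, hC, hD⟩ := exists_Dq1_bounds hq hν hr₀
      obtain ⟨B, hB⟩ := exists_rpow_le hr₀ R τ
      refine ⟨C * B, fun δ hδ => ?_⟩
      have hδ₀ : 0 < δ := hr₀.trans_le hδ.1
      rw [Real.rpow_neg hδ₀.le, ← div_eq_mul_inv, le_div_iff₀ (by positivity)]
      exact mul_le_mul (hD δ hδ.1).1 (hB δ hδ) (by positivity) hC.le) hε
  obtain ⟨C₂, -, h₂⟩ := hge.exists_forall_le (fun δ hδ => (Dq1_pos hq hν hδ).le)
    (fun r₀ hr₀ => by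
      obtain ⟨C, -, hD⟩ := exists_Dq1_bounds hq hν hr₀
      obtain ⟨B, hB⟩ := exists_rpow_le hr₀ R (-τ)
      refine ⟨B * C, fun δ hδ => (hB δ hδ).trans ?_⟩
      rw [mul_assoc]
      have hδ₀ : 0 < δ := hr₀.trans_le hδ.1
      exact le_mul_of_one_le_right ((Real.rpow_nonneg hδ₀.le _).trans (hB δ hδ))
        (hD δ hδ.1).2) hε
  refine ⟨max C₁ C₂, by positivity, fun δ hδ => ⟨(h₁ δ hδ).trans ?_, (h₂ δ hδ).trans ?_⟩⟩
  all_goals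
    have hδ₀ : 0 < δ := hδ.1
    have := Dq1_pos hq hν hδ₀
    gcongr
  exacts [le_max_left _ _, le_max_right _ _]

end Line

/-! ### Strips of stopping rectangles -/

namespace SelfAffineCarpet

open scoped ENNReal

variable {ι : Type*} [Fintype ι] (S : SelfAffineCarpet ι) (w : List ι)

/-- The coordinate projection along the longest side of the rectangle of a word. -/
noncomputable def axis : ℝ × ℝ → ℝ := S.atLong w Prod.fst Prod.snd

lemma axis_mem_pair : S.axis w ∈ ({Prod.fst, Prod.snd} : Set (ℝ × ℝ → ℝ)) := by
  unfold axis MoranData.atLong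
  split_ifs <;> simp

lemma measurable_axis : Measurable (S.axis w) := by
  rcases S.axis_mem_pair w with h | h <;> rw [h]
  exacts [measurable_fst, measurable_snd]

lemma axis_mem_Icc {z : ℝ × ℝ} (hz : z ∈ closedUnitSq) : S.axis w z ∈ Icc 0 1 := by
  rcases S.axis_mem_pair w with h | h <;> rw [h]
  exacts [hz.1, hz.2]

instance : IsProbabilityMeasure (S.μ.map (S.axis w)) :=
  Measure.isProbabilityMeasure_map (S.measurable_axis w).aemeasurable

lemma map_compl_Icc {f : ℝ × ℝ → ℝ} (hf : Measurable f)
    (hfQ : ∀ z ∈ closedUnitSq, f z ∈ Icc (0 : ℝ) 1) : S.μ.map f (Icc 0 1)ᶜ = 0 := by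
  rw [Measure.map_apply hf measurableSet_Icc.compl]
  exact measure_mono_null (fun z hz hzQ => hz (hfQ z hzQ)) S.measure_compl_closedUnitSq

lemma map_axis_compl_Icc : S.μ.map (S.axis w) (Icc 0 1)ᶜ = 0 :=
  S.map_compl_Icc (S.measurable_axis w) fun _ => S.axis_mem_Icc w

lemma long_mul_abs_axis_sub_le (z z' : ℝ × ℝ) :
    S.long w * |S.axis w z - S.axis w z'| ≤ dist (S.wordMap w z) (S.wordMap w z') := by
  rw [Prod.dist_eq, Real.dist_eq, Real.dist_eq, abs_wordMap_fst_sub, abs_wordMap_snd_sub]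
  unfold axis MoranData.atLong MoranData.long
  split_ifs with h
  · rw [max_eq_left h]
    exact le_max_left _ _
  · rw [max_eq_right (not_le.1 h).le]
    exact le_max_right _ _

lemma dist_wordMap_le {z z' : ℝ × ℝ} (hz : z ∈ closedUnitSq) (hz' : z' ∈ closedUnitSq) :
    dist (S.wordMap w z) (S.wordMap w z') ≤
      max (S.long w * |S.axis w z - S.axis w z'|) (S.short w) := by
  have h₁ : S.width w * |z.1 - z'.1| ≤ S.width w :=
    mul_le_of_le_one_right (S.width_mem w).1.le <| abs_sub_le_iff.2
      ⟨by linarith [hz.1.2, hz'.1.1], by linarith [hz.1.1, hz'.1.2]⟩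
  have h₂ : S.height w * |z.2 - z'.2| ≤ S.height w :=
    mul_le_of_le_one_right (S.height_mem w).1.le <| abs_sub_le_iff.2
      ⟨by linarith [hz.2.2, hz'.2.1], by linarith [hz.2.1, hz'.2.2]⟩
  rw [Prod.dist_eq, Real.dist_eq, Real.dist_eq, abs_wordMap_fst_sub, abs_wordMap_snd_sub]
  unfold axis MoranData.atLong MoranData.long MoranData.short
  split_ifs with h
  · rw [max_eq_left h, min_eq_right h]
    exact max_le_max_left _ h₂
  · rw [max_eq_right (not_le.1 h).le, min_eq_left (not_le.1 h).le, max_comm]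
    exact max_le_max_left _ h₁

/-- The mesh square with index `k` meets the image under `w` of the strip of the unit square over
the mesh interval with index `j` along the longest side of `w`; the mesh intervals are scaled so
that the image of the strip has length `δ`. -/
def Meets (δ : ℝ) (k : ℤ × ℤ) (w : List ι) (j : ℤ) : Prop :=
  ∃ z ∈ closedUnitSq, S.axis w z ∈ meshCube1 (δ / S.long w) j ∧ S.wordMap w z ∈ meshCube2 δ k

variable {S w} {δ r q : ℝ} {K : Finset (List ι)}

lemma encard_setOf_meets_strip_le (hδ : 0 < δ) (hw : S.short w ≤ δ) (j : ℤ) :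
    {k | S.Meets δ k w j}.encard ≤ (9 : ℕ) := by
  have hlong := (S.long_mem w).1
  refine (Set.encard_le_encard ?_).trans (encard_setOf_meets_meshCube2_le hδ (n := 1)
    (s := S.wordMap w '' {z ∈ closedUnitSq | S.axis w z ∈ meshCube1 (δ / S.long w) j}) ?_)
  · rintro k ⟨z, hz, hzj, hzk⟩
    exact ⟨_, mem_image_of_mem _ ⟨hz, hzj⟩, hzk⟩
  · rintro _ ⟨z, ⟨hz, hzj⟩, rfl⟩ _ ⟨z', ⟨hz', hzj'⟩, rfl⟩
    refine (S.dist_wordMap_le w hz hz').trans (max_le ?_ ?_)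
    · rw [Nat.cast_one, one_mul, mul_comm, ← le_div_iff₀ hlong]
      exact abs_sub_le_iff.2 ⟨sub_le_of_mem_meshCube1 hzj hzj', sub_le_of_mem_meshCube1 hzj' hzj⟩
    · rwa [Nat.cast_one, one_mul]

lemma encard_setOf_strip_meets_le (hδ : 0 < δ) (w : List ι) (k : ℤ × ℤ) :
    {j | S.Meets δ k w j}.encard ≤ (3 : ℕ) := by
  have hlong := (S.long_mem w).1
  refine (Set.encard_le_encard ?_).trans (encard_setOf_meets_meshCube1_le (div_pos hδ hlong)
    (n := 1) (s := S.axis w '' {z | S.wordMap w z ∈ meshCube2 δ k}) ?_)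
  · rintro j ⟨z, -, hzj, hzk⟩
    exact ⟨_, mem_image_of_mem _ hzk, hzj⟩
  · rintro _ ⟨z, hz, rfl⟩ _ ⟨z', hz', rfl⟩
    rw [Nat.cast_one, one_mul, le_div_iff₀' hlong]
    calc S.long w * (S.axis w z - S.axis w z') ≤ S.long w * |S.axis w z - S.axis w z'| := by
          gcongr
          exact le_abs_self _
      _ ≤ δ := (S.long_mul_abs_axis_sub_le w z z').trans (dist_le_of_mem_meshCube2 hz hz')

lemma encard_setOf_word_meets_le (hK : S.IsStopping r δ K) (hr : r ∈ Ioo (0 : ℝ) 1) (hδ : 0 < δ)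
    (k : ℤ × ℤ) : {x : K × ℤ | S.Meets δ k x.1 x.2}.encard ≤ (⌊9 / r ^ 2⌋₊ * 3 : ℕ) := by
  set W := K.filter fun w => ∃ z ∈ closedUnitSq, S.wordMap w z ∈ meshCube2 δ k
  have hW : W.card ≤ ⌊9 / r ^ 2⌋₊ := by
    refine Nat.le_floor ((le_div_iff₀ (pow_pos hr.1 2)).2 ?_)
    exact S.card_filter_meets_meshCube2_le hK hr hδ k
  have hcard : (W.subtype (· ∈ K)).card ≤ W.card := by
    rw [Finset.card_subtype]
    exact Finset.card_filter_le _ _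
  refine (encard_le_mul_of_encard_fiber_le (t := W.subtype (· ∈ K)) ?_ fun w : K =>
    encard_setOf_strip_meets_le hδ w.1 k).trans (Nat.cast_le.2 <|
      Nat.mul_le_mul_right 3 (hcard.trans hW))
  rintro ⟨w, j⟩ ⟨z, hz, -, hzk⟩
  exact Finset.mem_subtype.2 (Finset.mem_filter.2 ⟨w.2, z, hz, hzk⟩)

variable (S) in
/-- The mass that the word `w` places on the image of the strip with index `j`. -/
noncomputable def stripMass (δ : ℝ) (w : List ι) (j : ℤ) : ℝ≥0∞ :=
  ENNReal.ofReal (S.mass w) * S.μ.map (S.axis w) (meshCube1 (δ / S.long w) j)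

lemma momentSum_stripMass :
    momentSum q (S.stripMass δ w) = ENNReal.ofReal (S.mass w) ^ q *
      momentSum q fun j => S.μ.map (S.axis w) (meshCube1 (δ / S.long w) j) :=
  momentSum_const_mul (ENNReal.ofReal_pos.2 (S.mass_pos w)).ne'

lemma momentSum_stripMass_ne_top (hq : 0 ≤ q) (hδ : 0 < δ) :
    momentSum q (S.stripMass δ w) ≠ ∞ := by
  rw [momentSum_stripMass]
  exact ENNReal.mul_ne_top (ENNReal.rpow_ne_top_of_nonneg hq ENNReal.ofReal_ne_top)
    (momentSum_meshCube1_ne_top hq (S.map_axis_compl_Icc w) (div_pos hδ (S.long_mem w).1))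

lemma toReal_momentSum_stripMass (hq : 0 ≤ q) : (momentSum q (S.stripMass δ w)).toReal =
    S.mass w ^ q * Dq1 (S.μ.map (S.axis w)) (δ / S.long w) q := by
  rw [momentSum_stripMass, ENNReal.toReal_mul, ← Dq1_eq_toReal _ hq, ← ENNReal.toReal_rpow,
    ENNReal.toReal_ofReal (S.mass_pos w).le]

lemma measure_meshCube2_le_tsum_stripMass (hK : S.IsStopping r δ K) (hδ : 0 < δ) (k : ℤ × ℤ) :
    S.μ (meshCube2 δ k) ≤
      ∑' x : {x : K × ℤ | S.Meets δ k x.1 x.2}, S.stripMass δ x.1.1 x.1.2 := by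
  have hword (w : List ι) : S.μ (S.wordMap w ⁻¹' meshCube2 δ k) ≤
      ∑' j : {j | S.Meets δ k w j}, S.μ (S.axis w ⁻¹' meshCube1 (δ / S.long w) j) :=
    measure_le_tsum_of_cover (B := fun j => S.axis w ⁻¹' meshCube1 (δ / S.long w) j)
      S.measure_compl_closedUnitSq fun z hz hzk =>
        (exists_mem_meshCube1 (div_pos hδ (S.long_mem w).1) (S.axis w z)).imp
          fun j hj => ⟨⟨z, hz, hj, hzk⟩, hj⟩
  rw [S.measure_eq_sum hK.isCompletePrefixCode (measurableSet_meshCube2 δ k),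
    tsum_subtype {x : K × ℤ | S.Meets δ k x.1 x.2} fun x => S.stripMass δ x.1 x.2,
    ENNReal.tsum_prod', tsum_fintype, ← Finset.sum_coe_sort K]
  refine Finset.sum_le_sum fun w _ => (mul_le_mul_right (hword w) _).trans_eq ?_
  rw [← ENNReal.tsum_mul_left]
  simp only [← Measure.map_apply (S.measurable_axis _) (measurableSet_meshCube1 _ _)]
  exact tsum_subtype {j | S.Meets δ k w j} (S.stripMass δ w)

lemma stripMass_le_tsum_measure_meshCube2 (hK : S.IsStopping r δ K) (hδ : 0 < δ) (hw : w ∈ K)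
    (j : ℤ) : S.stripMass δ w j ≤ ∑' k : {k | S.Meets δ k w j}, S.μ (meshCube2 δ k) := by
  have hword : S.μ (S.axis w ⁻¹' meshCube1 (δ / S.long w) j) ≤
      ∑' k : {k | S.Meets δ k w j}, S.μ (S.wordMap w ⁻¹' meshCube2 δ k) :=
    measure_le_tsum_of_cover (B := fun k => S.wordMap w ⁻¹' meshCube2 δ k)
      S.measure_compl_closedUnitSq fun z hz hzj =>
        (exists_mem_meshCube2 hδ (S.wordMap w z)).imp fun k hk => ⟨⟨z, hz, hzj, hk⟩, hk⟩
  rw [stripMass, Measure.map_apply (S.measurable_axis w) (measurableSet_meshCube1 _ _)]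
  refine (mul_le_mul_right hword _).trans ?_
  rw [← ENNReal.tsum_mul_left]
  refine ENNReal.tsum_le_tsum fun k => ?_
  rw [S.measure_eq_sum hK.isCompletePrefixCode (measurableSet_meshCube2 δ k)]
  exact Finset.single_le_sum (f := fun w => ENNReal.ofReal (S.mass w) *
    S.μ (S.wordMap w ⁻¹' meshCube2 δ k)) (fun _ _ => zero_le) hw

lemma momentSum_meshCube2_le (hK : S.IsStopping r δ K) (hr : r ∈ Ioo (0 : ℝ) 1) (hδ : 0 < δ)
    (hq : 0 ≤ q) : momentSum q (fun k => S.μ (meshCube2 δ k)) ≤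
      (⌊9 / r ^ 2⌋₊ * 3 : ℕ) ^ q * (9 : ℕ) * ∑ w ∈ K, momentSum q (S.stripMass δ w) := by
  rw [← momentSum_prod_finset]
  exact momentSum_le hq (encard_setOf_word_meets_le hK hr hδ)
    (fun x : K × ℤ => encard_setOf_meets_strip_le hδ (hK.short_le _ x.1.2) _)
    (measure_meshCube2_le_tsum_stripMass hK hδ)

lemma sum_momentSum_stripMass_le (hK : S.IsStopping r δ K) (hr : r ∈ Ioo (0 : ℝ) 1) (hδ : 0 < δ)
    (hq : 0 ≤ q) : ∑ w ∈ K, momentSum q (S.stripMass δ w) ≤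
      (9 : ℕ) ^ q * (⌊9 / r ^ 2⌋₊ * 3 : ℕ) * momentSum q fun k => S.μ (meshCube2 δ k) := by
  rw [← momentSum_prod_finset]
  exact momentSum_le hq (R := fun (x : K × ℤ) k => S.Meets δ k x.1 x.2)
    (fun x : K × ℤ => encard_setOf_meets_strip_le hδ (hK.short_le _ x.1.2) _)
    (encard_setOf_word_meets_le hK hr hδ)
    fun x => stripMass_le_tsum_measure_meshCube2 hK hδ x.1.2 x.2

lemma exists_Dq2_bounds (S : SelfAffineCarpet ι) (hr : r ∈ Ioo (0 : ℝ) 1) (hq : 0 ≤ q) :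
    ∃ C > 0, ∀ δ > 0, ∀ K, S.IsStopping r δ K →
      Dq2 S.μ δ q ≤ C * ∑ w ∈ K, S.mass w ^ q * Dq1 (S.μ.map (S.axis w)) (δ / S.long w) q ∧
      ∑ w ∈ K, S.mass w ^ q * Dq1 (S.μ.map (S.axis w)) (δ / S.long w) q ≤ C * Dq2 S.μ δ q := by
  set m : ℕ := ⌊9 / r ^ 2⌋₊ * 3
  refine ⟨max 1 (max (m ^ q * 9) (9 ^ q * m)), by positivity, fun δ hδ K hK => ?_⟩
  have hne (n n' : ℕ) : (n : ℝ≥0∞) ^ q * n' ≠ ∞ := ENNReal.mul_ne_top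
    (ENNReal.rpow_ne_top_of_nonneg hq (ENNReal.natCast_ne_top _)) (ENNReal.natCast_ne_top _)
  have hsum : ∑ w ∈ K, momentSum q (S.stripMass δ w) ≠ ∞ :=
    ENNReal.sum_ne_top.2 fun w _ => momentSum_stripMass_ne_top hq hδ
  have hle := momentSum_meshCube2_le hK hr hδ hq
  have hD : momentSum q (fun k => S.μ (meshCube2 δ k)) ≠ ∞ :=
    ne_top_of_le_ne_top (ENNReal.mul_ne_top (hne _ _) hsum) hle
  have hle' := ENNReal.toReal_mono (ENNReal.mul_ne_top (hne _ _) hsum) hle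
  have hge' := ENNReal.toReal_mono (ENNReal.mul_ne_top (hne _ _) hD)
    (sum_momentSum_stripMass_le hK hr hδ hq)
  simp only [ENNReal.toReal_mul, ← ENNReal.toReal_rpow, ENNReal.toReal_natCast,
    ← Dq2_eq_toReal _ hq, ENNReal.toReal_sum fun _ _ => momentSum_stripMass_ne_top hq hδ,
    toReal_momentSum_stripMass hq] at hle' hge'
  refine ⟨hle'.trans ?_, hge'.trans ?_⟩
  · gcongr
    · exact Finset.sum_nonneg fun w _ => mul_nonneg (Real.rpow_nonneg (S.mass_pos w).le q)
        (Dq1_pos hq (S.map_axis_compl_Icc w) (div_pos hδ (S.long_mem w).1)).le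
    · exact_mod_cast le_max_of_le_right (le_max_left _ _)
  · gcongr
    · rw [Dq2_eq_toReal _ hq]
      exact ENNReal.toReal_nonneg
    · exact_mod_cast le_max_of_le_right (le_max_right _ _)

end SelfAffineCarpet

/-! ### Sums over stopping families -/

section Rectangle

variable {r u v δ η T X Y D : ℝ}

lemma rpow_le_rpow_neg_of_abs_le (hr : 0 < r) (hu : u ∈ Icc r 1) (hY : |Y| ≤ D) :
    u ^ Y ≤ r ^ (-D) :=
  (Real.rpow_le_rpow_of_exponent_ge (hr.trans_le hu.1) hu.2
    ((neg_le_neg hY).trans (neg_abs_le Y))).trans <|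
    Real.rpow_le_rpow_of_nonpos hr hu.1 (neg_nonpos.2 ((abs_nonneg Y).trans hY))

lemma rpow_le_mul_rpow_mul_rpow (hr : 0 < r) (hu : r ≤ u) (hv : v ∈ Icc r 1) (hX : T ≤ X)
    (hD : |X - T| + |Y| ≤ D) : u ^ T ≤ r ^ (-D) * (u ^ X * v ^ Y) := by
  have hu₀ := hr.trans_le hu
  have hv₀ := hr.trans_le hv.1
  have hr₁ := hv.1.trans hv.2
  have hu' : u ^ (T - X) ≤ r ^ (-|X - T|) := by
    rw [abs_of_nonneg (sub_nonneg.2 hX), neg_sub]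
    exact Real.rpow_le_rpow_of_nonpos hr hu (sub_nonpos.2 hX)
  have hv' : v ^ (-Y) ≤ r ^ (-|Y|) := rpow_le_rpow_neg_of_abs_le hr hv (abs_neg Y).le
  calc u ^ T = u ^ (T - X) * v ^ (-Y) * (u ^ X * v ^ Y) := by
        rw [Real.rpow_sub hu₀, Real.rpow_neg hv₀.le]
        field_simp
    _ ≤ r ^ (-|X - T|) * r ^ (-|Y|) * (u ^ X * v ^ Y) := by gcongr
    _ ≤ r ^ (-D) * (u ^ X * v ^ Y) := by
        rw [← Real.rpow_add hr]
        gcongr ?_ * _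
        exact Real.rpow_le_rpow_of_exponent_ge hr hr₁ (by linarith)

lemma rpow_mul_rpow_le_mul_rpow (hr : 0 < r) (hδ : δ ∈ Ioc 0 1) (hη : 0 < η) (hu : r ≤ u)
    (hv : v ∈ Icc r 1) (hX : X ≤ T ∨ u ≤ δ ^ (-η)) (hD : |X - T| + |Y| ≤ D) :
    u ^ X * v ^ Y ≤ r ^ (-D) * δ ^ (-(η * D)) * u ^ T := by
  have hu₀ := hr.trans_le hu
  have hv₀ := hr.trans_le hv.1
  have hr₁ := hv.1.trans hv.2
  have hDX : |X - T| ≤ D := by linarith [abs_nonneg Y]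
  have hδ' : 1 ≤ δ ^ (-(η * D)) := Real.one_le_rpow_of_pos_of_le_one_of_nonpos hδ.1 hδ.2
    (neg_nonpos.2 (mul_nonneg hη.le ((abs_nonneg _).trans hDX)))
  have hu' : u ^ (X - T) ≤ r ^ (-|X - T|) * δ ^ (-(η * D)) := by
    rcases le_or_gt X T with h | h
    · refine le_trans ?_ (le_mul_of_one_le_right (by positivity) hδ')
      rw [abs_of_nonpos (sub_nonpos.2 h), neg_neg]
      exact Real.rpow_le_rpow_of_nonpos hr hu (sub_nonpos.2 h)
    · rw [abs_of_pos (sub_pos.2 h)] at hDX ⊢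
      refine le_trans ?_ (le_mul_of_one_le_left (by have := hδ.1; positivity)
        (Real.one_le_rpow_of_pos_of_le_one_of_nonpos hr hr₁ (by linarith)))
      calc u ^ (X - T) ≤ (δ ^ (-η)) ^ (X - T) :=
            Real.rpow_le_rpow hu₀.le (hX.resolve_left (not_le.2 h)) (sub_pos.2 h).le
        _ = δ ^ (-(η * (X - T))) := by rw [← Real.rpow_mul hδ.1.le, neg_mul]
        _ ≤ δ ^ (-(η * D)) := Real.rpow_le_rpow_of_exponent_ge hδ.1 hδ.2
            (neg_le_neg (mul_le_mul_of_nonneg_left hDX hη.le))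
  calc u ^ X * v ^ Y = u ^ (X - T) * v ^ Y * u ^ T := by
        rw [Real.rpow_sub hu₀]
        field_simp
    _ ≤ r ^ (-|X - T|) * δ ^ (-(η * D)) * r ^ (-|Y|) * u ^ T := by
        gcongr
        exact rpow_le_rpow_neg_of_abs_le hr hv le_rfl
    _ = r ^ (-(|X - T| + |Y|)) * δ ^ (-(η * D)) * u ^ T := by
        rw [neg_add, Real.rpow_add hr]
        ring
    _ ≤ r ^ (-D) * δ ^ (-(η * D)) * u ^ T := by
        gcongr ?_ * _ * _
        exact Real.rpow_le_rpow_of_exponent_ge hr hr₁ (neg_le_neg hD)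

end Rectangle

namespace MoranData

variable {ι : Type*} {M : MoranData ι} {w : List ι} {r δ η x y x' y' τA τB D : ℝ}
  {K : Finset (List ι)}

lemma prod_map_weight_mul_rpow (hδ : 0 < δ) (w : List ι) :
    (w.map (M.weight x y)).prod * δ ^ (-(x + y)) = M.mass w *
      ((M.long w / δ) ^ M.atLong w x y * (M.short w / δ) ^ M.atLong w y x) := by
  rw [prod_map_weight, mul_assoc (M.mass w), width_rpow_mul_height_rpow,
    Real.div_rpow (M.long_mem w).1.le hδ.le, Real.div_rpow (M.short_pos w).le hδ.le,
    Real.rpow_neg hδ.le, ← M.atLong_add_atLong w, Real.rpow_add hδ]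
  field_simp

lemma prod_map_weight_shift (s t : ℝ) (w : List ι) :
    (w.map (M.weight (x + s) (y - s + t))).prod =
      (w.map (M.weight x y)).prod * ((M.width w / M.height w) ^ s * M.height w ^ t) := by
  have hw := (M.width_mem w).1
  have hh := (M.height_mem w).1
  rw [prod_map_weight, prod_map_weight, Real.rpow_add hw, Real.rpow_add hh, Real.rpow_sub hh,
    Real.div_rpow hw.le hh.le]
  field_simp

lemma atLong_le_or_le (w : List ι) (hx : τA ≤ x) (hy : τB ≤ y') :
    M.atLong w τA τB ≤ M.atLong w x y ∨ M.atLong w τA τB ≤ M.atLong w x' y' := by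
  unfold atLong
  split_ifs
  exacts [.inl hx, .inr hy]

lemma atLong_le_or_wide_or_high (t : ℝ) (w : List ι) :
    (M.atLong w x y ≤ M.atLong w τA τB ∨ M.long w ≤ M.short w * t) ∨
      (τA < x ∧ M.height w * t < M.width w) ∨ (τB < y ∧ M.width w * t < M.height w) := by
  unfold atLong long short
  rcases le_or_gt (M.height w) (M.width w) with h | h
  · rw [if_pos h, if_pos h, max_eq_left h, min_eq_right h, ← not_lt, ← not_lt]
    tauto
  · rw [if_neg h.not_ge, if_neg h.not_ge, max_eq_right h.le, min_eq_left h.le, ← not_lt, ← not_lt]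
    tauto

lemma prod_map_weight_pos (w : List ι) : 0 < (w.map (M.weight x y)).prod :=
  List.prod_pos (by simpa using fun i _ => M.weight_pos x y i)

lemma abs_atLong_sub_add_abs_atLong_le (hD : |x - τA| + |y - τB| + |x| + |y| ≤ D) :
    |M.atLong w x y - M.atLong w τA τB| + |M.atLong w y x| ≤ D := by
  unfold atLong
  split_ifs <;> linarith [abs_nonneg x, abs_nonneg y, abs_nonneg (x - τA), abs_nonneg (y - τB)]

/-- The model for the planar moment sum at scale `δ`: the mass of a word is weighted by its
longest side in units of `δ`, raised to the power `τA` for wide and `τB` for high rectangles. -/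
noncomputable def sideSum (M : MoranData ι) (τA τB δ : ℝ) (K : Finset (List ι)) : ℝ :=
  ∑ w ∈ K, M.mass w * (M.long w / δ) ^ M.atLong w τA τB

lemma sideSum_rpow (q : ℝ) : (M.rpow q).sideSum τA τB δ K =
    ∑ w ∈ K, M.mass w ^ q * (M.long w / δ) ^ M.atLong w τA τB := by
  simp only [sideSum, mass_rpow]
  rfl

lemma sideSum_term_nonneg (hδ : 0 < δ) (w : List ι) :
    0 ≤ M.mass w * (M.long w / δ) ^ M.atLong w τA τB :=
  mul_nonneg (M.mass_pos w).le (Real.rpow_nonneg (div_pos (M.long_mem w).1 hδ).le _)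

variable [Fintype ι]

namespace IsStopping

lemma swap (hK : M.IsStopping r δ K) : M.swap.IsStopping r δ K where
  isCompletePrefixCode := hK.isCompletePrefixCode
  mul_le_short w hw := (hK.mul_le_short w hw).trans_eq (min_comm _ _)
  short_le w hw := (min_comm _ _).trans_le (hK.short_le w hw)

lemma rpow (hK : M.IsStopping r δ K) (q : ℝ) : (M.rpow q).IsStopping r δ K := ⟨hK.1, hK.2, hK.3⟩

lemma le_long_div (hK : M.IsStopping r δ K) (hδ : 0 < δ) (hw : w ∈ K) : r ≤ M.long w / δ :=
  (le_div_iff₀ hδ).2 ((hK.mul_le_short w hw).trans (M.short_le_long w))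

lemma short_div_mem_Icc (hK : M.IsStopping r δ K) (hδ : 0 < δ) (hw : w ∈ K) :
    M.short w / δ ∈ Icc r 1 :=
  ⟨(le_div_iff₀ hδ).2 (hK.mul_le_short w hw), (div_le_one hδ).2 (hK.short_le w hw)⟩

lemma mass_mul_long_rpow_le (hK : M.IsStopping r δ K) (hr : 0 < r) (hδ : 0 < δ)
    (hD : |x - τA| + |y - τB| + |x| + |y| ≤ D) (hw : w ∈ K)
    (hx : M.atLong w τA τB ≤ M.atLong w x y) :
    M.mass w * (M.long w / δ) ^ M.atLong w τA τB ≤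
      r ^ (-D) * δ ^ (-(x + y)) * (w.map (M.weight x y)).prod := by
  rw [mul_assoc, mul_comm (δ ^ _), prod_map_weight_mul_rpow hδ, mul_left_comm]
  exact mul_le_mul_of_nonneg_left (rpow_le_mul_rpow_mul_rpow hr (hK.le_long_div hδ hw)
    (hK.short_div_mem_Icc hδ hw) hx (abs_atLong_sub_add_abs_atLong_le hD)) (M.mass_pos w).le

lemma prod_map_weight_mul_rpow_le (hK : M.IsStopping r δ K) (hr : 0 < r) (hδ : δ ∈ Ioc 0 1)
    (hη : 0 < η) (hD : |x - τA| + |y - τB| + |x| + |y| ≤ D) (hw : w ∈ K)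
    (hx : M.atLong w x y ≤ M.atLong w τA τB ∨ M.long w ≤ M.short w * δ ^ (-η)) :
    (w.map (M.weight x y)).prod * δ ^ (-(x + y)) ≤
      r ^ (-D) * δ ^ (-(η * D)) * (M.mass w * (M.long w / δ) ^ M.atLong w τA τB) := by
  rw [prod_map_weight_mul_rpow hδ.1, mul_left_comm (r ^ (-D) * δ ^ (-(η * D)))]
  refine mul_le_mul_of_nonneg_left (rpow_mul_rpow_le_mul_rpow hr hδ hη (hK.le_long_div hδ.1 hw)
    (hK.short_div_mem_Icc hδ.1 hw) (hx.imp_right fun h => ?_)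
    (abs_atLong_sub_add_abs_atLong_le hD)) (M.mass_pos w).le
  rw [div_le_iff₀' hδ.1]
  exact h.trans (mul_le_mul_of_nonneg_right (hK.short_le w hw) (Real.rpow_nonneg hδ.1.le _))

end IsStopping

lemma subpolyLE_sideSum {K : ℝ → Finset (List ι)} (hr : 0 < r)
    (hK : ∀ δ ∈ Ioc (0 : ℝ) 1, M.IsStopping r δ (K δ)) (h : M.moranSum x y = 1)
    (h' : M.moranSum x' y' = 1) (hx : τA ≤ x) (hy : τB ≤ y') :
    SubpolyLE (fun δ => M.sideSum τA τB δ (K δ)) fun δ => δ ^ (-max (x + y) (x' + y')) := by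
  set m := max (x + y) (x' + y')
  obtain ⟨D, hD, hD'⟩ : ∃ D, |x - τA| + |y - τB| + |x| + |y| ≤ D ∧
    |x' - τA| + |y' - τB| + |x'| + |y'| ≤ D := ⟨_, le_max_left _ _, le_max_right _ _⟩
  refine .of_exists_const (eventually_mem_nhdsWithin.mono fun δ hδ => Real.rpow_nonneg hδ.le _)
    fun ε hε => ⟨2 * r ^ (-D), ?_⟩
  filter_upwards [Ioo_mem_nhdsGT (zero_lt_one (α := ℝ))] with δ hδ
  have hK := hK δ ⟨hδ.1, hδ.2.le⟩
  have hδ₀ : 0 < δ := hδ.1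
  have hδε : 1 ≤ δ ^ (-ε) :=
    Real.one_le_rpow_of_pos_of_le_one_of_nonpos hδ.1 hδ.2.le (neg_nonpos.2 hε.le)
  have hm {e : ℝ} (he : e ≤ m) : r ^ (-D) * δ ^ (-e) ≤ r ^ (-D) * δ ^ (-m) := by
    gcongr ?_ * ?_
    exact Real.rpow_le_rpow_of_exponent_ge hδ.1 hδ.2.le (neg_le_neg he)
  calc M.sideSum τA τB δ (K δ)
      ≤ ∑ w ∈ K δ, (r ^ (-D) * δ ^ (-(x + y)) * (w.map (M.weight x y)).prod +
          r ^ (-D) * δ ^ (-(x' + y')) * (w.map (M.weight x' y')).prod) := by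
        refine Finset.sum_le_sum fun w hw => ?_
        have hW := prod_map_weight_pos (M := M) (x := x) (y := y) w
        have hW' := prod_map_weight_pos (M := M) (x := x') (y := y') w
        rcases atLong_le_or_le (M := M) (y := y) (x' := x') w hx hy with h | h
        · exact (hK.mass_mul_long_rpow_le hr hδ₀ hD hw h).trans
            (le_add_of_nonneg_right (by positivity))
        · exact (hK.mass_mul_long_rpow_le hr hδ₀ hD' hw h).trans
            (le_add_of_nonneg_left (by positivity))
    _ = r ^ (-D) * δ ^ (-(x + y)) + r ^ (-D) * δ ^ (-(x' + y')) := by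
        rw [Finset.sum_add_distrib, ← Finset.mul_sum, ← Finset.mul_sum,
          hK.isCompletePrefixCode.sum_prod_eq_one h, hK.isCompletePrefixCode.sum_prod_eq_one h',
          mul_one, mul_one]
    _ ≤ 2 * r ^ (-D) * δ ^ (-m) := by linarith [hm (le_max_left _ _), hm (le_max_right _ _)]
    _ ≤ 2 * r ^ (-D) * δ ^ (-ε) * δ ^ (-m) := by
        gcongr ?_ * _
        exact le_mul_of_one_le_right (by positivity) hδε

section Deviation

variable [Nonempty ι]

lemma exists_sum_wide_le (h : M.moranSum x y = 1) (hE : M.drift x y ≤ 0) (hr : 0 < r)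
    (hη : 0 < η) : ∃ t : ℝ, 0 < t ∧ ∀ δ > 0, ∀ K, M.IsStopping r δ K →
      ∑ w ∈ K with M.height w * δ ^ (-η) < M.width w, (w.map (M.weight x y)).prod ≤
        (δ / r) ^ t := by
  obtain ⟨s, hs, hlt⟩ := exists_moranSum_lt_of_drift_nonpos hE (half_pos hη)
  set t := s * (η / 2) with ht
  have ht₀ : 0 < t := by positivity
  refine ⟨t, ht₀, fun δ hδ K hK => ?_⟩
  have hwide : ∀ w ∈ K.filter (fun w => M.height w * δ ^ (-η) < M.width w),
      (r / δ) ^ t * (w.map (M.weight x y)).prod ≤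
        (w.map (M.weight (x + s) (y - s + t))).prod := by
    intro w hw
    obtain ⟨hwK, hw⟩ := Finset.mem_filter.1 hw
    have hh := (M.height_mem w).1
    rw [prod_map_weight_shift, mul_comm]
    refine mul_le_mul_of_nonneg_left ?_ (prod_map_weight_pos w).le
    calc (r / δ) ^ t = (δ ^ (-η)) ^ s * (r * δ) ^ t := by
          rw [← Real.rpow_mul hδ.le, Real.mul_rpow hr.le hδ.le, Real.div_rpow hr.le hδ.le,
            mul_left_comm, ← Real.rpow_add hδ, div_eq_mul_inv, ← Real.rpow_neg hδ.le]
          congr 2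
          rw [ht]
          ring
      _ ≤ (M.width w / M.height w) ^ s * M.height w ^ t := by
          have := (M.width_mem w).1
          gcongr
          · exact (le_div_iff₀' hh).2 hw.le
          · exact (hK.mul_le_short w hwK).trans (min_le_right _ _)
  rw [← inv_div, Real.inv_rpow (by positivity), ← one_div, le_div_iff₀' (by positivity),
    Finset.mul_sum]
  calc _ ≤ _ := Finset.sum_le_sum hwide
    _ ≤ ∑ w ∈ K, (w.map (M.weight (x + s) (y - s + t))).prod :=
        Finset.sum_le_sum_of_subset_of_nonneg (Finset.filter_subset _ _)
          fun w _ _ => (prod_map_weight_pos w).le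
    _ ≤ 1 := hK.isCompletePrefixCode.sum_prod_le_one
        (fun i => (M.weight_pos _ _ i).le) (h ▸ hlt.le)

lemma eventually_sum_wide_le (h : M.moranSum x y = 1) (hE : x ≤ τA ∨ M.drift x y ≤ 0)
    (hr : 0 < r) (hη : 0 < η) : ∀ᶠ δ in 𝓝[>] 0, ∀ K, M.IsStopping r δ K →
      ∑ w ∈ K with τA < x ∧ M.height w * δ ^ (-η) < M.width w, (w.map (M.weight x y)).prod ≤
        1 / 4 := by
  rcases le_or_gt x τA with hx | hx
  · simp [hx.not_gt]
  obtain ⟨t, ht, hle⟩ := exists_sum_wide_le h (hE.resolve_left hx.not_ge) hr hη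
  have hlim : Tendsto (fun δ => (δ / r) ^ t) (𝓝[>] 0) (𝓝 0) := by
    have : ContinuousAt (fun δ => (δ / r) ^ t) 0 :=
      ContinuousAt.rpow_const (by fun_prop) (.inr ht.le)
    simpa [ContinuousAt, Real.zero_rpow ht.ne'] using this.tendsto.mono_left nhdsWithin_le_nhds
  filter_upwards [hlim.eventually_le_const (show (0 : ℝ) < 1 / 4 by norm_num),
    self_mem_nhdsWithin] with δ hδ hδ₀ K hK
  simpa only [hx, true_and] using (hle δ hδ₀ K hK).trans hδ

lemma eventually_sum_high_le (h : M.moranSum x y = 1) (hE : y ≤ τB ∨ 0 ≤ M.drift x y)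
    (hr : 0 < r) (hη : 0 < η) : ∀ᶠ δ in 𝓝[>] 0, ∀ K, M.IsStopping r δ K →
      ∑ w ∈ K with τB < y ∧ M.width w * δ ^ (-η) < M.height w, (w.map (M.weight x y)).prod ≤
        1 / 4 := by
  have hwide := eventually_sum_wide_le (M := M.swap) (x := y) (y := x) (τA := τB)
    (by rwa [moranSum_swap]) (by rwa [drift_swap, neg_nonpos]) hr hη
  simp only [weight_swap] at hwide
  exact hwide.mono fun δ h K hK => h K hK.swap

lemma eventually_half_le_sum (h : M.moranSum x y = 1) (hx : x ≤ τA ∨ M.drift x y ≤ 0)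
    (hy : y ≤ τB ∨ 0 ≤ M.drift x y) (hr : 0 < r) (hη : 0 < η) :
    ∀ᶠ δ in 𝓝[>] 0, ∀ K, M.IsStopping r δ K →
      1 / 2 ≤ ∑ w ∈ K with
        M.atLong w x y ≤ M.atLong w τA τB ∨ M.long w ≤ M.short w * δ ^ (-η),
        (w.map (M.weight x y)).prod := by
  filter_upwards [eventually_sum_wide_le h hx hr hη, eventually_sum_high_le h hy hr hη]
    with δ hwide hhigh K hK
  specialize hwide K hK
  specialize hhigh K hK
  have hsum := hK.isCompletePrefixCode.sum_prod_eq_one h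
  rw [Finset.sum_filter] at hwide hhigh ⊢
  have hcover := Finset.sum_le_sum fun w (_ : w ∈ K) =>
    show (w.map (M.weight x y)).prod ≤
      (if M.atLong w x y ≤ M.atLong w τA τB ∨ M.long w ≤ M.short w * δ ^ (-η) then
        (w.map (M.weight x y)).prod else 0) +
      (if τA < x ∧ M.height w * δ ^ (-η) < M.width w then (w.map (M.weight x y)).prod else 0) +
      (if τB < y ∧ M.width w * δ ^ (-η) < M.height w then (w.map (M.weight x y)).prod else 0) by
    have := prod_map_weight_pos (M := M) (x := x) (y := y) w
    have := atLong_le_or_wide_or_high (M := M) (x := x) (y := y) (τA := τA) (τB := τB) (δ ^ (-η)) w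
    split_ifs <;> first | linarith | tauto
  rw [Finset.sum_add_distrib, Finset.sum_add_distrib, hsum] at hcover
  linarith

end Deviation

lemma rpow_neg_subpolyLE_sideSum [Nonempty ι] {K : ℝ → Finset (List ι)} (hr : 0 < r)
    (hK : ∀ δ ∈ Ioc (0 : ℝ) 1, M.IsStopping r δ (K δ)) (h : M.moranSum x y = 1)
    (hx : x ≤ τA ∨ M.drift x y ≤ 0) (hy : y ≤ τB ∨ 0 ≤ M.drift x y) :
    SubpolyLE (fun δ => δ ^ (-(x + y))) fun δ => M.sideSum τA τB δ (K δ) := by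
  obtain ⟨D, hD₀, hD⟩ : ∃ D > 0, |x - τA| + |y - τB| + |x| + |y| ≤ D :=
    ⟨|x - τA| + |y - τB| + |x| + |y| + 1, by positivity, (lt_add_one _).le⟩
  refine .of_exists_const (eventually_mem_nhdsWithin.mono fun δ hδ =>
    Finset.sum_nonneg fun w _ => sideSum_term_nonneg hδ w) fun ε hε => ⟨2 * r ^ (-D), ?_⟩
  have hη : 0 < ε / D := div_pos hε hD₀
  filter_upwards [Ioo_mem_nhdsGT (zero_lt_one (α := ℝ)), eventually_half_le_sum h hx hy hr hη]
    with δ hδ hhalf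
  have hK := hK δ ⟨hδ.1, hδ.2.le⟩
  have hδ₀ : 0 < δ := hδ.1
  set G := (K δ).filter fun w => M.atLong w x y ≤ M.atLong w τA τB ∨
    M.long w ≤ M.short w * δ ^ (-(ε / D))
  have hterm (w) (hw : w ∈ G) : (w.map (M.weight x y)).prod * δ ^ (-(x + y)) ≤
      r ^ (-D) * δ ^ (-ε) * (M.mass w * (M.long w / δ) ^ M.atLong w τA τB) := by
    obtain ⟨hw, hgood⟩ := Finset.mem_filter.1 hw
    simpa only [div_mul_cancel₀ ε hD₀.ne'] using
      hK.prod_map_weight_mul_rpow_le hr ⟨hδ.1, hδ.2.le⟩ hη hD hw hgood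
  calc δ ^ (-(x + y)) ≤ 2 * ((∑ w ∈ G, (w.map (M.weight x y)).prod) * δ ^ (-(x + y))) := by
        rw [← mul_assoc]
        exact le_mul_of_one_le_left (by positivity) (by linarith [hhalf _ hK])
    _ ≤ 2 * (r ^ (-D) * δ ^ (-ε) * M.sideSum τA τB δ (K δ)) := by
        rw [Finset.sum_mul, sideSum, Finset.mul_sum (K δ)]
        refine mul_le_mul_of_nonneg_left ?_ (zero_le_two (α := ℝ))
        refine (Finset.sum_le_sum hterm).trans (Finset.sum_le_sum_of_subset_of_nonneg
          (Finset.filter_subset _ _) fun w _ _ => ?_)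
        exact mul_nonneg (by positivity) (sideSum_term_nonneg hδ.1 w)
    _ = 2 * r ^ (-D) * δ ^ (-ε) * M.sideSum τA τB δ (K δ) := by ring

end MoranData

/-! ### The planar spectrum -/

lemma exists_scaled_bounds_of_hasLq1 {ν : Measure ℝ} [IsProbabilityMeasure ν] {q τ r ε : ℝ}
    (hτ : HasLq1 ν q τ) (hq : 0 ≤ q) (hν : ν (Icc 0 1)ᶜ = 0) (hr : 0 < r) (hε : 0 < ε) :
    ∃ C > 0, ∀ δ > 0, ∀ c ∈ Ioc (0 : ℝ) 1, r ≤ c / δ →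
      Dq1 ν (δ / c) q ≤ C * δ ^ (-ε) * (c / δ) ^ τ ∧
      (c / δ) ^ τ ≤ C * δ ^ (-ε) * Dq1 ν (δ / c) q := by
  obtain ⟨C, hC, h⟩ := exists_bounds_of_hasLq1 hτ hq hν (1 / r) hε
  refine ⟨C, hC, fun δ hδ c hc hrc => ?_⟩
  have hδc : 0 < δ / c := div_pos hδ hc.1
  have hmem : δ / c ∈ Ioc 0 (1 / r) := ⟨hδc, by simpa using one_div_le_one_div_of_le hr hrc⟩
  have hτpow : (δ / c) ^ (-τ) = (c / δ) ^ τ := by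
    rw [Real.rpow_neg hδc.le, ← Real.inv_rpow hδc.le, inv_div]
  have hεpow : (δ / c) ^ (-ε) ≤ δ ^ (-ε) :=
    Real.rpow_le_rpow_of_nonpos hδ (le_div_self hδ.le hc.1 hc.2) (neg_nonpos.2 hε.le)
  have hD := Dq1_pos hq hν hδc
  have hcδ : 0 < c / δ := div_pos hc.1 hδ
  obtain ⟨hle, hge⟩ := h _ hmem
  rw [hτpow] at hle hge
  exact ⟨hle.trans (by gcongr), hge.trans (by gcongr)⟩

lemma hasLq2_of_subpolyLE {ν : Measure (ℝ × ℝ)} {q τ : ℝ}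
    (hle : SubpolyLE (fun δ => Dq2 ν δ q) fun δ => δ ^ (-τ))
    (hge : SubpolyLE (fun δ => δ ^ (-τ)) fun δ => Dq2 ν δ q) : HasLq2 ν q τ := by
  refine (tendsto_log_div_neg_log_iff ?_).2 ⟨hle, hge⟩
  filter_upwards [hge 1 one_pos, self_mem_nhdsWithin] with δ h (hδ : 0 < δ)
  exact pos_of_mul_pos_right ((Real.rpow_pos_of_pos hδ _).trans_le h) (Real.rpow_nonneg hδ.le _)

namespace SelfAffineCarpet

variable {ι : Type*} [Fintype ι] {S : SelfAffineCarpet ι} {q r τA τB : ℝ}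

lemma exists_axis_bounds (hA : HasLq1 (S.μ.map Prod.fst) q τA)
    (hB : HasLq1 (S.μ.map Prod.snd) q τB) (hq : 0 ≤ q) (hr : 0 < r) {ε : ℝ} (hε : 0 < ε) :
    ∃ C > 0, ∀ δ > 0, ∀ w, r ≤ S.long w / δ →
      Dq1 (S.μ.map (S.axis w)) (δ / S.long w) q ≤
        C * δ ^ (-ε) * (S.long w / δ) ^ S.atLong w τA τB ∧
      (S.long w / δ) ^ S.atLong w τA τB ≤
        C * δ ^ (-ε) * Dq1 (S.μ.map (S.axis w)) (δ / S.long w) q := by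
  have := Measure.isProbabilityMeasure_map (μ := S.μ) measurable_fst.aemeasurable
  have := Measure.isProbabilityMeasure_map (μ := S.μ) measurable_snd.aemeasurable
  obtain ⟨C, hC, h⟩ := exists_scaled_bounds_of_hasLq1 hA hq
    (S.map_compl_Icc measurable_fst fun z hz => hz.1) hr hε
  obtain ⟨C', -, h'⟩ := exists_scaled_bounds_of_hasLq1 hB hq
    (S.map_compl_Icc measurable_snd fun z hz => hz.2) hr hε
  refine ⟨max C C', by positivity, fun δ hδ w hw => ?_⟩
  have hlong := (S.long_mem w).1
  have hD := Dq1_pos hq (S.map_axis_compl_Icc w) (div_pos hδ hlong)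
  have hbounds : ∃ c ≤ max C C', Dq1 (S.μ.map (S.axis w)) (δ / S.long w) q ≤
        c * δ ^ (-ε) * (S.long w / δ) ^ S.atLong w τA τB ∧
      (S.long w / δ) ^ S.atLong w τA τB ≤
        c * δ ^ (-ε) * Dq1 (S.μ.map (S.axis w)) (δ / S.long w) q := by
    unfold axis MoranData.atLong
    split_ifs
    · exact ⟨C, le_max_left _ _, h δ hδ _ (S.long_mem w) hw⟩
    · exact ⟨C', le_max_right _ _, h' δ hδ _ (S.long_mem w) hw⟩
  obtain ⟨c, hc, hle, hge⟩ := hbounds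
  exact ⟨hle.trans (by gcongr), hge.trans (by gcongr)⟩

lemma exists_sum_mass_mul_Dq1_bounds (hA : HasLq1 (S.μ.map Prod.fst) q τA)
    (hB : HasLq1 (S.μ.map Prod.snd) q τB) (hq : 0 ≤ q) (hr : 0 < r) {ε : ℝ} (hε : 0 < ε) :
    ∃ C > 0, ∀ δ > 0, ∀ K, S.IsStopping r δ K →
      ∑ w ∈ K, S.mass w ^ q * Dq1 (S.μ.map (S.axis w)) (δ / S.long w) q ≤
        C * δ ^ (-ε) * (S.rpow q).sideSum τA τB δ K ∧
      (S.rpow q).sideSum τA τB δ K ≤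
        C * δ ^ (-ε) * ∑ w ∈ K, S.mass w ^ q * Dq1 (S.μ.map (S.axis w)) (δ / S.long w) q := by
  obtain ⟨C, hC, h⟩ := exists_axis_bounds hA hB hq hr hε
  refine ⟨C, hC, fun δ hδ K hK => ?_⟩
  have hsum {f g : List ι → ℝ} (hfg : ∀ w ∈ K, f w ≤ C * δ ^ (-ε) * g w) :
      ∑ w ∈ K, S.mass w ^ q * f w ≤ C * δ ^ (-ε) * ∑ w ∈ K, S.mass w ^ q * g w := by
    rw [Finset.mul_sum]
    refine Finset.sum_le_sum fun w hw => ?_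
    rw [mul_left_comm]
    exact mul_le_mul_of_nonneg_left (hfg w hw) (Real.rpow_nonneg (S.mass_pos w).le q)
  rw [MoranData.sideSum_rpow]
  exact ⟨hsum fun w hw => (h δ hδ w (hK.le_long_div hδ hw)).1,
    hsum fun w hw => (h δ hδ w (hK.le_long_div hδ hw)).2⟩

lemma subpolyLE_Dq2_sideSum {K : ℝ → Finset (List ι)} (hA : HasLq1 (S.μ.map Prod.fst) q τA)
    (hB : HasLq1 (S.μ.map Prod.snd) q τB) (hq : 0 ≤ q) (hr : r ∈ Ioo (0 : ℝ) 1)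
    (hK : ∀ δ ∈ Ioc (0 : ℝ) 1, S.IsStopping r δ (K δ)) :
    SubpolyLE (fun δ => Dq2 S.μ δ q) (fun δ => (S.rpow q).sideSum τA τB δ (K δ)) ∧
      SubpolyLE (fun δ => (S.rpow q).sideSum τA τB δ (K δ)) fun δ => Dq2 S.μ δ q := by
  obtain ⟨C, hC, hD⟩ := S.exists_Dq2_bounds hr hq
  have hD₀ (δ : ℝ) : 0 ≤ Dq2 S.μ δ q := by
    rw [Dq2_eq_toReal _ hq]
    exact ENNReal.toReal_nonneg
  constructor
  · refine .of_exists_const (eventually_mem_nhdsWithin.mono fun δ hδ =>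
      Finset.sum_nonneg fun w _ => MoranData.sideSum_term_nonneg hδ w) fun ε hε => ?_
    obtain ⟨C', -, h⟩ := exists_sum_mass_mul_Dq1_bounds hA hB hq hr.1 hε
    refine ⟨C * C', ?_⟩
    filter_upwards [Ioo_mem_nhdsGT (zero_lt_one (α := ℝ))] with δ hδ
    have hK := hK δ ⟨hδ.1, hδ.2.le⟩
    linear_combination (hD δ hδ.1 _ hK).1 + C * (h δ hδ.1 _ hK).1
  · refine .of_exists_const (.of_forall hD₀) fun ε hε => ?_
    obtain ⟨C', hC', h⟩ := exists_sum_mass_mul_Dq1_bounds hA hB hq hr.1 hε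
    refine ⟨C' * C, ?_⟩
    filter_upwards [Ioo_mem_nhdsGT (zero_lt_one (α := ℝ))] with δ hδ
    have hK := hK δ ⟨hδ.1, hδ.2.le⟩
    have hδε : 0 < C' * δ ^ (-ε) := mul_pos hC' (Real.rpow_pos_of_pos hδ.1 _)
    linear_combination (h δ hδ.1 _ hK).2 + C' * δ ^ (-ε) * (hD δ hδ.1 _ hK).2

lemma hasLq2_of_moranSum_eq_one {x₀ y₀ x₁ y₁ x y : ℝ} (hA : HasLq1 (S.μ.map Prod.fst) q τA)
    (hB : HasLq1 (S.μ.map Prod.snd) q τB) (hq : 0 ≤ q)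
    (h₀ : (S.rpow q).moranSum x₀ y₀ = 1) (h₁ : (S.rpow q).moranSum x₁ y₁ = 1)
    (h : (S.rpow q).moranSum x y = 1) (hx₀ : τA ≤ x₀) (hy₁ : τB ≤ y₁)
    (hx : x ≤ τA ∨ (S.rpow q).drift x y ≤ 0) (hy : y ≤ τB ∨ 0 ≤ (S.rpow q).drift x y)
    (hmax : x + y = max (x₀ + y₀) (x₁ + y₁)) : HasLq2 S.μ q (x + y) := by
  have := S.nonempty
  obtain ⟨r, hr, hK⟩ := S.exists_isStopping
  choose! K hK using hK
  obtain ⟨hle, hge⟩ := subpolyLE_Dq2_sideSum hA hB hq hr hK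
  have hK' (δ) (hδ : δ ∈ Ioc (0 : ℝ) 1) := (hK δ hδ).rpow q
  refine hasLq2_of_subpolyLE (hle.trans ?_) (.trans ?_ hge)
  · rw [hmax]
    exact MoranData.subpolyLE_sideSum hr.1 hK' h₀ h₁ hx₀ hy₁
  · exact MoranData.rpow_neg_subpolyLE_sideSum hr.1 hK' h hx hy

lemma hasLq2_max {x₁ y₀ : ℝ} (hA : HasLq1 (S.μ.map Prod.fst) q τA)
    (hB : HasLq1 (S.μ.map Prod.snd) q τB) (hq : 0 ≤ q) (h₀ : (S.rpow q).moranSum τA y₀ = 1)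
    (h₁ : (S.rpow q).moranSum x₁ τB = 1) (hx : x₁ ≤ τA) :
    HasLq2 S.μ q (max (τA + y₀) (x₁ + τB)) := by
  have := S.nonempty
  have hy : y₀ ≤ τB := (MoranData.le_iff_le_of_moranSum_eq (h₁.trans h₀.symm)).1 hx
  rcases max_choice (τA + y₀) (x₁ + τB) with h | h <;> rw [h]
  · exact hasLq2_of_moranSum_eq_one hA hB hq h₀ h₁ h₀ le_rfl le_rfl (.inl le_rfl) (.inl hy) h.symm
  · exact hasLq2_of_moranSum_eq_one hA hB hq h₀ h₁ h₁ le_rfl le_rfl (.inl hx) (.inl le_rfl) h.symm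

lemma hasLq2_of_isLeast {x₁ y₀ s : ℝ} (hA : HasLq1 (S.μ.map Prod.fst) q τA)
    (hB : HasLq1 (S.μ.map Prod.snd) q τB) (hq : 0 ≤ q) (h₀ : (S.rpow q).moranSum τA y₀ = 1)
    (h₁ : (S.rpow q).moranSum x₁ τB = 1) (hs : IsLeast ((S.rpow q).arcSums τA x₁) s) :
    HasLq2 S.μ q s := by
  have := S.nonempty
  obtain ⟨⟨x, y, h, hx₀, hx₁, rfl⟩, hmin⟩ := hs
  have hy : τB ≤ y := (MoranData.le_iff_le_of_moranSum_eq (h.trans h₁.symm)).1 hx₁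
  refine hasLq2_of_moranSum_eq_one hA hB hq h h h hx₀ hy ?_ ?_ (max_self _).symm
  · exact hx₀.eq_or_lt.imp ge_of_eq fun hlt =>
      MoranData.drift_nonpos_of_mem_lowerBounds h hlt hx₁ hmin
  · rcases hx₁.eq_or_lt with rfl | hlt
    · exact .inl ((MoranData.le_iff_le_of_moranSum_eq (h₁.trans h.symm)).1 le_rfl)
    · exact .inr (MoranData.drift_nonneg_of_mem_lowerBounds h₀ h₁ h hx₀ hlt hmin)

lemma exists_hasLq2 (S : SelfAffineCarpet ι) {x₁ y₀ : ℝ} (hA : HasLq1 (S.μ.map Prod.fst) q τA)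
    (hB : HasLq1 (S.μ.map Prod.snd) q τB) (hq : 0 ≤ q) (h₀ : (S.rpow q).moranSum τA y₀ = 1)
    (h₁ : (S.rpow q).moranSum x₁ τB = 1) : ∃ τ, HasLq2 S.μ q τ := by
  have := S.nonempty
  rcases le_total x₁ τA with hx | hx
  · exact ⟨_, hasLq2_max hA hB hq h₀ h₁ hx⟩
  · exact (MoranData.exists_isLeast_arcSums h₀ h₁ hx).imp fun _ =>
      hasLq2_of_isLeast hA hB hq h₀ h₁

lemma eq_max_of_hasLq2 (S : SelfAffineCarpet ι) {x₁ y₀ τ : ℝ}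
    (hA : HasLq1 (S.μ.map Prod.fst) q τA) (hB : HasLq1 (S.μ.map Prod.snd) q τB)
    (hq : 0 ≤ q) (h₀ : (S.rpow q).moranSum τA y₀ = 1)
    (h₁ : (S.rpow q).moranSum x₁ τB = 1) (hx : x₁ ≤ τA) (hτ : HasLq2 S.μ q τ) :
    τ = max (τA + y₀) (x₁ + τB) :=
  tendsto_nhds_unique hτ (hasLq2_max hA hB hq h₀ h₁ hx)

lemma isLeast_of_hasLq2 (S : SelfAffineCarpet ι) {x₁ y₀ τ : ℝ}
    (hA : HasLq1 (S.μ.map Prod.fst) q τA) (hB : HasLq1 (S.μ.map Prod.snd) q τB)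
    (hq : 0 ≤ q) (h₀ : (S.rpow q).moranSum τA y₀ = 1)
    (h₁ : (S.rpow q).moranSum x₁ τB = 1) (hx : τA ≤ x₁) (hτ : HasLq2 S.μ q τ) :
    IsLeast ((S.rpow q).arcSums τA x₁) τ := by
  have := S.nonempty
  obtain ⟨s, hs⟩ := MoranData.exists_isLeast_arcSums h₀ h₁ hx
  rwa [tendsto_nhds_unique hτ (hasLq2_of_isLeast hA hB hq h₀ h₁ hs)]

end SelfAffineCarpet

end LqGIFS

/-- the diagonal IFS case; answer to Fraser's question.  For a planar
box-like self-affine IFS with all linear parts diagonal, satisfying the ROSC, with a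
positive probability vector `p` and self-affine measure `μ`:  for each `q ≥ 0` the
dichotomy holds, `τ_μ(q)` exists, and it is given by the stated closed forms in cases
(a), (b), with the refinements (b1), (b2), (b3). -/
theorem statement5
    (N : ℕ) (hN : 1 ≤ N)
    (a b sa sb : Fin N → ℝ) (tr : Fin N → ℝ × ℝ)
    (ha : ∀ i, a i ∈ Set.Ioo (0 : ℝ) 1) (hb : ∀ i, b i ∈ Set.Ioo (0 : ℝ) 1)
    (hsa : ∀ i, sa i = 1 ∨ sa i = -1) (hsb : ∀ i, sb i = 1 ∨ sb i = -1)
    (ψ : Fin N → ℝ × ℝ → ℝ × ℝ)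
    (hψ : ∀ i z, ψ i z =
      (sa i * a i * z.1 + (tr i).1, sb i * b i * z.2 + (tr i).2))
    (hROSC : (∀ i, ψ i '' (Set.Ioo (0:ℝ) 1 ×ˢ Set.Ioo (0:ℝ) 1) ⊆
        Set.Ioo (0:ℝ) 1 ×ˢ Set.Ioo (0:ℝ) 1) ∧
      ∀ i j, i ≠ j → Disjoint (ψ i '' (Set.Ioo (0:ℝ) 1 ×ˢ Set.Ioo (0:ℝ) 1))
        (ψ j '' (Set.Ioo (0:ℝ) 1 ×ˢ Set.Ioo (0:ℝ) 1)))
    (p : Fin N → ℝ) (hp : ∀ i, 0 < p i) (hp1 : ∑ i, p i = 1)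
    (μ : Measure (ℝ × ℝ)) (hprob : IsProbabilityMeasure μ)
    (hμ : μ = ∑ i : Fin N, ENNReal.ofReal (p i) • μ.map (ψ i))
    (q : ℝ) (hq : 0 ≤ q)
    (τA τB : ℝ)
    (hτA : HasLq1 (μ.map Prod.fst) q τA)
    (hτB : HasLq1 (μ.map Prod.snd) q τB)
    (γA γB : ℝ)
    (hγA : (∑ i, p i ^ q * a i ^ τA * b i ^ (γA - τA)) = 1)
    (hγB : (∑ i, p i ^ q * a i ^ (γB - τB) * b i ^ τB) = 1) :
    (max γA γB ≤ τA + τB ∨ τA + τB ≤ min γA γB) ∧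
    ∃ τ : ℝ, HasLq2 μ q τ ∧
      (max γA γB ≤ τA + τB →
        τ = max γA γB ∧
        IsGreatest {s : ℝ | ∃ x y : ℝ, (∑ i, p i ^ q * a i ^ x * b i ^ y) = 1 ∧
          γB - τB ≤ x ∧ x ≤ τA ∧ s = x + y} τ ∧
        IsGreatest {s : ℝ | ∃ x y : ℝ, (∑ i, p i ^ q * a i ^ x * b i ^ y) = 1 ∧
          γA - τA ≤ y ∧ y ≤ τB ∧ s = x + y} τ) ∧
      (τA + τB ≤ min γA γB →
        IsLeast {s : ℝ | ∃ x y : ℝ, (∑ i, p i ^ q * a i ^ x * b i ^ y) = 1 ∧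
          τA ≤ x ∧ x ≤ γB - τB ∧ s = x + y} τ ∧
        IsLeast {s : ℝ | ∃ x y : ℝ, (∑ i, p i ^ q * a i ^ x * b i ^ y) = 1 ∧
          τB ≤ y ∧ y ≤ γA - τA ∧ s = x + y} τ ∧
        ((0 ≤ ∑ i, p i ^ q * a i ^ τA * b i ^ (γA - τA) * Real.log (a i / b i)) →
          τ = γA) ∧
        ((∑ i, p i ^ q * b i ^ τB * a i ^ (γB - τB) * Real.log (a i / b i)) ≤ 0 →
          τ = γB) ∧
        ((¬ (0 ≤ ∑ i, p i ^ q * a i ^ τA * b i ^ (γA - τA) * Real.log (a i / b i)) ∧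
          ¬ ((∑ i, p i ^ q * b i ^ τB * a i ^ (γB - τB) * Real.log (a i / b i)) ≤ 0)) →
          ∃ x y : ℝ, τA ≤ x ∧ x ≤ γB - τB ∧ τB ≤ y ∧ y ≤ γA - τA ∧
            (∑ i, p i ^ q * a i ^ x * b i ^ y) = 1 ∧
            (∑ i, p i ^ q * a i ^ x * b i ^ y * Real.log (a i / b i)) = 0 ∧
            τ = x + y ∧ τ < min γA γB)) := by
  let S : SelfAffineCarpet (Fin N) :=
    { P := p, a := a, b := b, m := fun i => sa i * a i, n := fun i => sb i * b i, tr := tr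
      P_pos := hp, a_mem := ha, b_mem := hb
      abs_m := fun i => by rcases hsa i with h | h <;> simp [h, abs_of_pos (ha i).1]
      abs_n := fun i => by rcases hsb i with h | h <;> simp [h, abs_of_pos (hb i).1]
      ψ := ψ, ψ_apply := hψ, image_subset := hROSC.1, disjoint_image := hROSC.2
      sum_P := hp1, μ := μ, isProbabilityMeasure := hprob, invariant := hμ }
  have := S.nonempty
  obtain ⟨y₀, rfl⟩ : ∃ y₀, γA = τA + y₀ := ⟨γA - τA, by ring⟩
  obtain ⟨x₁, rfl⟩ : ∃ x₁, γB = x₁ + τB := ⟨γB - τB, by ring⟩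
  simp only [add_sub_cancel_left, add_sub_cancel_right, mul_right_comm (p _ ^ q) (b _ ^ τB)]
    at hγA hγB ⊢
  have h₀ : (S.rpow q).moranSum τA y₀ = 1 := hγA
  have h₁ : (S.rpow q).moranSum x₁ τB = 1 := hγB
  rw [MoranData.max_add_le_add_iff_of_moranSum_eq (h₀.trans h₁.symm),
    MoranData.add_le_min_add_iff_of_moranSum_eq (h₀.trans h₁.symm)]
  obtain ⟨τ, hτ⟩ := S.exists_hasLq2 hτA hτB hq h₀ h₁
  refine ⟨le_total x₁ τA, τ, hτ, fun hx => ?_, fun hx => ?_⟩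
  · obtain rfl := S.eq_max_of_hasLq2 hτA hτB hq h₀ h₁ hx hτ
    have hmax := MoranData.isGreatest_arcSums h₀ h₁ hx
    exact ⟨rfl, hmax, (MoranData.setOf_height_mem_eq_arcSums h₁ h₀).symm ▸ hmax⟩
  · have hmin := S.isLeast_of_hasLq2 hτA hτB hq h₀ h₁ hx hτ
    exact ⟨hmin, (MoranData.setOf_height_mem_eq_arcSums h₀ h₁).symm ▸ hmin,
      fun hE => hmin.unique (MoranData.isLeast_arcSums_of_drift_nonneg h₀ hE hx),
      fun hE => hmin.unique (MoranData.isLeast_arcSums_of_drift_nonpos h₀ h₁ hE hx), fun hE =>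
        MoranData.exists_drift_eq_zero_of_isLeast h₀ h₁ (not_le.1 hE.1) (not_le.1 hE.2) hmin⟩
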